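/- arXiv:1702.01694 — 4 statements merged into one kernel-verified Lean document; each statement's English description precedes it below -/
import Mathlib

section
/- Assume k is an integral domain. Then for each i ∈ {1,2,3,4}, the ideal of the localization C_{x_i} generated by the three Jacobian minors J_{r,s} with r < s and r, s ∈ {1,2,3,4}\{i} is a prime ideal of C_{x_i}. -/
open MvPolynomial

/-- Index type for the coefficient indeterminates `U_{i,α}`, `i ∈ {1,2}`,
`α` an exponent vector in four variables with `|α| = d i`. -/
def CoefIdx (d : Fin 2 → ℕ) : Type :=
  Σ i : Fin 2, {α : Fin 4 →₀ ℕ // (α.sum fun _ e => e) = d i}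

/-- The universal ring of coefficients `A = k[U_{i,α}]`. -/
abbrev Aring (k : Type*) [CommRing k] (d : Fin 2 → ℕ) : Type _ :=
  MvPolynomial (CoefIdx d) k

/-- The polynomial ring `C = A[x₁,x₂,x₃,x₄]`. -/
abbrev Cring (k : Type*) [CommRing k] (d : Fin 2 → ℕ) : Type _ :=
  MvPolynomial (Fin 4) (Aring k d)

/-- The generic homogeneous polynomial `f_i = Σ_{|α| = d i} U_{i,α} x^α` of degree `d i`. -/
noncomputable def genF (k : Type*) [CommRing k] (d : Fin 2 → ℕ) (i : Fin 2) : Cring k d :=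
  ∑ α ∈ (Finset.finsuppAntidiag (Finset.univ : Finset (Fin 4)) (d i)).attach,
    monomial α.1 (X (⟨i, ⟨α.1, (Finset.mem_finsuppAntidiag'.mp α.2).1⟩⟩ : CoefIdx d))

/-- The 2-minors `J_{r,s} = ∂ᵣf₁·∂ₛf₂ − ∂ₛf₁·∂ᵣf₂` of the Jacobian matrix of `(f₁,f₂)`. -/
noncomputable def Jmin (k : Type*) [CommRing k] (d : Fin 2 → ℕ) (r s : Fin 4) : Cring k d :=
  pderiv r (genF k d 0) * pderiv s (genF k d 1) -
    pderiv s (genF k d 0) * pderiv r (genF k d 1)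

/-- The ideal `𝒟 = (f₁, f₂) + (J_{r,s} : r < s) ⊂ C`. -/
noncomputable def Dideal (k : Type*) [CommRing k] (d : Fin 2 → ℕ) : Ideal (Cring k d) :=
  Ideal.span ({genF k d 0, genF k d 1} ∪ {p | ∃ r s : Fin 4, r < s ∧ p = Jmin k d r s})

section Generic

variable {ι σ : Type*} {B : Type*} [CommRing B]

/-- Exponent map of the Segre parametrization. -/
noncomputable def segreExp (ι σ : Type*) : (ι × σ →₀ ℕ) →+ (ι ⊕ σ →₀ ℕ) :=
  Finsupp.liftAddHom fun p =>
    (Finsupp.singleAddHom (Sum.inl p.1) + Finsupp.singleAddHom (Sum.inr p.2))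

lemma segreExp_single (p : ι × σ) (n : ℕ) :
    segreExp ι σ (Finsupp.single p n) =
      Finsupp.single (Sum.inl p.1) n + Finsupp.single (Sum.inr p.2) n := by
  simp [segreExp]

/-- The ideal of all 2-minors of the generic matrix. -/
noncomputable def minorIdeal (ι σ B : Type*) [CommRing B] : Ideal (MvPolynomial (ι × σ) B) :=
  Ideal.span {p | ∃ a b r s, p = X (a, r) * X (b, s) - X (a, s) * X (b, r)}

lemma exists_of_segreExp_inl (m : ι × σ →₀ ℕ) (a : ι)
    (h : segreExp ι σ m (Sum.inl a) ≠ 0) : ∃ s, m (a, s) ≠ 0 := by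
  classical
  by_contra! hc
  apply h
  simp only [segreExp, Finsupp.liftAddHom_apply, Finsupp.sum, Finsupp.finsetSum_apply]
  refine Finset.sum_eq_zero fun p hp => ?_
  have hpa : p.1 ≠ a := by
    rintro rfl
    exact (Finsupp.mem_support_iff.mp hp) (hc p.2)
  simp [hpa]

lemma exists_of_segreExp_inr (m : ι × σ →₀ ℕ) (r : σ)
    (h : segreExp ι σ m (Sum.inr r) ≠ 0) : ∃ b, m (b, r) ≠ 0 := by
  classical
  by_contra! hc
  apply h
  simp only [segreExp, Finsupp.liftAddHom_apply, Finsupp.sum, Finsupp.finsetSum_apply]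
  refine Finset.sum_eq_zero fun p hp => ?_
  have hpa : p.2 ≠ r := by
    rintro rfl
    exact (Finsupp.mem_support_iff.mp hp) (hc p.1)
  simp [hpa]

lemma exists_eq_single_add {τ : Type*} (m : τ →₀ ℕ) (p : τ) (h : m p ≠ 0) :
    ∃ m', m = Finsupp.single p 1 + m' := by
  classical
  have : Finsupp.single p 1 ≤ m := by
    rw [Finsupp.single_le_iff]
    omega
  exact ⟨m - Finsupp.single p 1, (add_tsub_cancel_of_le this).symm⟩

lemma monomial_single_one_add {τ : Type*} (p : τ) (m : τ →₀ ℕ) :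
    (monomial (Finsupp.single p 1 + m) 1 : MvPolynomial τ B) = X p * monomial m 1 := by
  rw [X, monomial_mul, one_mul]

/-- Swap: a monomial with a row-`a` entry and a column-`r` entry is congruent to one with
an `(a,r)` entry, with the same exponent image. -/
lemma exists_segre_swap (m : ι × σ →₀ ℕ) (a : ι) (r : σ)
    (ha : segreExp ι σ m (Sum.inl a) ≠ 0) (hr : segreExp ι σ m (Sum.inr r) ≠ 0) :
    ∃ m', segreExp ι σ (Finsupp.single (a, r) 1 + m') = segreExp ι σ m ∧
      (monomial m 1 - monomial (Finsupp.single (a, r) 1 + m') 1 : MvPolynomial (ι × σ) B)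
        ∈ minorIdeal ι σ B := by
  obtain ⟨s, hs⟩ := exists_of_segreExp_inl m a ha
  obtain ⟨b, hb⟩ := exists_of_segreExp_inr m r hr
  obtain ⟨m1, rfl⟩ := exists_eq_single_add m (a, s) hs
  by_cases h : (a, s) = (b, r)
  · obtain ⟨rfl, rfl⟩ := Prod.mk.inj h
    exact ⟨m1, rfl, by simp⟩
  · have hb1 : m1 (b, r) ≠ 0 := by
      simpa [Finsupp.single_apply, h] using hb
    obtain ⟨m2, rfl⟩ := exists_eq_single_add m1 (b, r) hb1
    refine ⟨Finsupp.single (b, s) 1 + m2, ?_, ?_⟩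
    · simp only [map_add, segreExp_single]
      abel
    · simp only [monomial_single_one_add]
      have : (X (a, s) * (X (b, r) * monomial m2 1) - X (a, r) * (X (b, s) * monomial m2 1) :
          MvPolynomial (ι × σ) B) =
          monomial m2 1 * (X (a, s) * X (b, r) - X (a, r) * X (b, s)) := by ring
      rw [this]
      exact Ideal.mul_mem_left _ _ (Ideal.subset_span ⟨a, b, s, r, rfl⟩)

lemma segreExp_eq_zero (m : ι × σ →₀ ℕ) (h : segreExp ι σ m = 0) : m = 0 := by
  classical
  by_contra hm
  obtain ⟨p, hp⟩ := Finsupp.ne_iff.mp hm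
  obtain ⟨m', rfl⟩ := exists_eq_single_add m p hp
  have := DFunLike.congr_fun h (Sum.inl p.1)
  simp [segreExp_single] at this

lemma monomial_congr (m : ι × σ →₀ ℕ) : ∀ m' : ι × σ →₀ ℕ, segreExp ι σ m = segreExp ι σ m' →
    (monomial m 1 - monomial m' 1 : MvPolynomial (ι × σ) B) ∈ minorIdeal ι σ B := by
  classical
  induction hn : m.degree generalizing m with
  | zero =>
    intro m' h
    have hm : m = 0 := (Finsupp.degree_eq_zero_iff m).mp hn
    subst hm
    rw [map_zero] at h
    rw [segreExp_eq_zero m' h.symm]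
    simp
  | succ n ih =>
    intro m' h
    have hm : m ≠ 0 := by
      rintro rfl
      simp at hn
    obtain ⟨⟨a, r⟩, hp⟩ := Finsupp.ne_iff.mp hm
    obtain ⟨m0, rfl⟩ := exists_eq_single_add m (a, r) hp
    obtain ⟨m1, h1, h2⟩ := exists_segre_swap (B := B) m' a r
      (by rw [← h]; simp [segreExp_single]) (by rw [← h]; simp [segreExp_single])
    have h3 : segreExp ι σ m0 = segreExp ι σ m1 := by
      have := h.trans h1.symm
      rw [map_add, map_add] at this
      exact add_left_cancel this
    have h4 := ih m0 (by simp at hn; omega) m1 h3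
    have : (monomial (Finsupp.single (a, r) 1 + m0) 1 - monomial m' 1 :
        MvPolynomial (ι × σ) B) = X (a, r) * (monomial m0 1 - monomial m1 1) -
        (monomial m' 1 - monomial (Finsupp.single (a, r) 1 + m1) 1) := by
      simp only [monomial_single_one_add]; ring
    rw [this]
    exact Ideal.sub_mem _ (Ideal.mul_mem_left _ _ h4) h2

/-- The Segre parametrization. -/
noncomputable def segreHom (ι σ B : Type*) [CommRing B] :
    MvPolynomial (ι × σ) B →ₐ[B] MvPolynomial (ι ⊕ σ) B :=
  aeval fun p => X (Sum.inl p.1) * X (Sum.inr p.2)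

lemma segreHom_monomial (m : ι × σ →₀ ℕ) :
    segreHom ι σ B (monomial m 1) = monomial (segreExp ι σ m) 1 := by
  induction m using Finsupp.induction_linear with
  | zero => simp [segreHom]
  | add f g hf hg =>
    have : (monomial (f + g) 1 : MvPolynomial (ι × σ) B) = monomial f 1 * monomial g 1 := by
      rw [monomial_mul, one_mul]
    rw [this, map_mul, hf, hg, monomial_mul, one_mul, map_add]
  | single p n =>
    rw [segreExp_single]
    rw [segreHom, aeval_monomial, map_one, one_mul, Finsupp.prod_single_index (by simp), mul_pow,
      X_pow_eq_monomial, X_pow_eq_monomial, monomial_mul, one_mul]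

/-- Linear section up to the minors. -/
noncomputable def segreSec (ι σ B : Type*) [CommRing B] :
    MvPolynomial (ι ⊕ σ) B →ₗ[B] MvPolynomial (ι × σ) B :=
  (basisMonomials (ι ⊕ σ) B).constr B fun n =>
    monomial (Function.invFun (segreExp ι σ) n) (1 : B)

lemma sub_segreSec_mem (p : MvPolynomial (ι × σ) B) :
    p - segreSec ι σ B (segreHom ι σ B p) ∈ minorIdeal ι σ B := by
  induction p using MvPolynomial.induction_on' with
  | monomial m c =>
    have hc : (monomial m c : MvPolynomial (ι × σ) B) = c • monomial m 1 := by
      rw [smul_monomial, smul_eq_mul, mul_one]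
    rw [hc, map_smul, map_smul, ← smul_sub, segreHom_monomial, smul_eq_C_mul]
    apply Ideal.mul_mem_left
    have hb : (monomial (segreExp ι σ m) 1 : MvPolynomial (ι ⊕ σ) B) =
        basisMonomials (ι ⊕ σ) B (segreExp ι σ m) := by simp
    rw [hb, segreSec, Module.Basis.constr_basis]
    apply monomial_congr
    exact (Function.invFun_eq ⟨m, rfl⟩).symm
  | add p q hp hq =>
    have := Ideal.add_mem _ hp hq
    rw [map_add, map_add]
    convert this using 1
    ring

lemma minorIdeal_isPrime [IsDomain B] : (minorIdeal ι σ B).IsPrime := by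
  have : minorIdeal ι σ B = RingHom.ker (segreHom ι σ B) := by
    apply le_antisymm
    · rw [minorIdeal, Ideal.span_le]
      rintro _ ⟨a, b, r, s, rfl⟩
      simp only [SetLike.mem_coe, RingHom.mem_ker, segreHom, map_sub, map_mul, aeval_X]
      ring
    · intro p hp
      have := sub_segreSec_mem p
      rwa [(RingHom.mem_ker).mp hp, map_zero, sub_zero] at this
  rw [this]
  exact RingHom.ker_isPrime _

/-- Affine change of coordinates. -/
noncomputable def affEquiv {V : Type*} (u : V → Bˣ) (g : V → B) :
    MvPolynomial V B ≃ₐ[B] MvPolynomial V B :=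
  AlgEquiv.ofAlgHom (aeval fun v => X v * C (u v : B) + C (g v))
    (aeval fun v => (X v - C (g v)) * C ((u v)⁻¹ : Bˣ).val)
    (by
      ext1 v
      simp only [AlgHom.comp_apply, aeval_X, map_sub, map_mul, AlgHom.id_apply, algHom_C,
        algebraMap_eq]
      rw [add_sub_cancel_right, mul_assoc, ← C_mul]
      simp)
    (by
      ext1 v
      simp only [AlgHom.comp_apply, aeval_X, map_add, map_mul, AlgHom.id_apply, algHom_C,
        algebraMap_eq]
      rw [mul_assoc, ← C_mul]
      simp)

lemma affEquiv_X {V : Type*} (u : V → Bˣ) (g : V → B) (v : V) :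
    affEquiv u g (X v) = X v * C (u v : B) + C (g v) := by
  simp [affEquiv]

lemma isPrime_of_equiv {σ B L : Type*} [CommRing B] [IsDomain B] [LinearOrder σ] [CommRing L]
    (Θ : L ≃+* MvPolynomial (Fin 2 × σ) B) (J : σ → σ → L)
    (hJ : ∀ r s, Θ (J r s) = X (0, r) * X (1, s) - X (0, s) * X (1, r)) :
    (Ideal.span {p | ∃ r s, r < s ∧ p = J r s}).IsPrime := by
  set I := Ideal.span {p | ∃ r s, r < s ∧ p = J r s} with hI
  have key : ∀ r s, r < s → (X (0, r) * X (1, s) - X (0, s) * X (1, r) :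
      MvPolynomial (Fin 2 × σ) B) ∈ I.map (Θ : L →+* MvPolynomial (Fin 2 × σ) B) := by
    intro r s hrs
    rw [← hJ]
    exact Ideal.mem_map_of_mem (Θ : L →+* MvPolynomial (Fin 2 × σ) B)
      (Ideal.subset_span ⟨r, s, hrs, rfl⟩)
  have hmem : ∀ r s, (X (0, r) * X (1, s) - X (0, s) * X (1, r) :
      MvPolynomial (Fin 2 × σ) B) ∈ I.map (Θ : L →+* MvPolynomial (Fin 2 × σ) B) := by
    intro r s
    rcases lt_trichotomy r s with h | h | h
    · exact key r s h
    · subst h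
      simp
    · have := (Ideal.neg_mem_iff _).mpr (key s r h)
      rwa [neg_sub] at this
  have hmap : I.map (Θ : L →+* MvPolynomial (Fin 2 × σ) B) = minorIdeal (Fin 2) σ B := by
    apply le_antisymm
    · rw [hI, Ideal.map_span, Ideal.span_le]
      rintro _ ⟨_, ⟨r, s, hrs, rfl⟩, rfl⟩
      rw [RingHom.coe_coe, hJ]
      exact Ideal.subset_span ⟨0, 1, _, _, rfl⟩
    · rw [minorIdeal, Ideal.span_le]
      rintro _ ⟨a, b, r, s, rfl⟩
      have h0 : ∀ a : Fin 2, (X (a, r) * X (a, s) - X (a, s) * X (a, r) :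
          MvPolynomial (Fin 2 × σ) B) = 0 := fun a => by ring
      match a, b with
      | 0, 0 => rw [h0]; exact Ideal.zero_mem _
      | 0, 1 => exact hmem r s
      | 1, 0 =>
        rw [mul_comm (X (1, r)), mul_comm (X (1, s))]
        exact hmem s r
      | 1, 1 => rw [h0]; exact Ideal.zero_mem _
  have hp : (I.map (Θ : L →+* MvPolynomial (Fin 2 × σ) B)).IsPrime := by
    rw [hmap]
    exact minorIdeal_isPrime
  have hc : I = (I.map (Θ : L →+* MvPolynomial (Fin 2 × σ) B)).comap
      (Θ : L →+* MvPolynomial (Fin 2 × σ) B) :=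
    (Ideal.comap_map_of_bijective (Θ : L →+* MvPolynomial (Fin 2 × σ) B) Θ.bijective).symm
  rw [hc]
  exact Ideal.comap_isPrime _ _

end Generic

section Specific

variable (k : Type*) [CommRing k] (d : Fin 2 → ℕ) (hd : ∀ i, 0 < d i) (i : Fin 4)

/-- Special coefficients: those of `x_i^{d_j-1} x_r`, `r ≠ i`. -/
noncomputable def vIdx (p : Fin 2 × {r : Fin 4 // r ≠ i}) : CoefIdx d :=
  ⟨p.1, ⟨Finsupp.single i (d p.1 - 1) + Finsupp.single p.2.1 1, by
    rw [Finsupp.sum_add_index' (by simp) (by simp)]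
    rw [Finsupp.sum_single_index rfl, Finsupp.sum_single_index rfl]
    exact Nat.sub_add_cancel (hd p.1)⟩⟩

lemma vIdx_injective : Function.Injective (vIdx d hd i) := by
  rintro ⟨a, r, hr⟩ ⟨b, s, hs⟩ h
  obtain rfl : a = b := congrArg Sigma.fst h
  have h2 := eq_of_heq (Sigma.mk.inj h).2
  have h3 := add_left_cancel (congrArg Subtype.val h2)
  have h4 := (Finsupp.single_left_inj one_ne_zero).mp h3
  simpa using h4

/-- The remaining coefficients. -/
abbrev WIdx : Type := {c : CoefIdx d // ¬ c ∈ Set.range (vIdx d hd i)}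

open Classical in
/-- Splitting of the coefficient indices. -/
noncomputable def splitIdx : CoefIdx d ≃ (Fin 2 × {r : Fin 4 // r ≠ i}) ⊕ WIdx d hd i :=
  (Equiv.Set.sumCompl (Set.range (vIdx d hd i))).symm.trans
    (Equiv.sumCongr (Equiv.ofInjective _ (vIdx_injective d hd i)).symm (Equiv.refl _))

lemma splitIdx_v (p) : splitIdx d hd i (vIdx d hd i p) = Sum.inl p := by
  rw [← Equiv.eq_symm_apply]
  simp [splitIdx]

lemma splitIdx_w (c : WIdx d hd i) : splitIdx d hd i c.1 = Sum.inr c := by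
  rw [← Equiv.eq_symm_apply]
  simp [splitIdx]
  rfl

/-- Splitting of all variables. -/
noncomputable def splitAll : Fin 4 ⊕ CoefIdx d ≃
    (Fin 2 × {r : Fin 4 // r ≠ i}) ⊕ (Fin 4 ⊕ WIdx d hd i) :=
  ((Equiv.refl _).sumCongr (splitIdx d hd i)).trans
    ((Equiv.sumAssoc _ _ _).symm.trans
      (((Equiv.sumComm _ _).sumCongr (Equiv.refl _)).trans (Equiv.sumAssoc _ _ _)))

/-- The base ring. -/
abbrev E0 : Type _ := MvPolynomial (Fin 4 ⊕ WIdx d hd i) k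

/-- The ring `C` as a polynomial ring in the special coefficients. -/
noncomputable def eqC : Cring k d ≃ₐ[k]
    MvPolynomial (Fin 2 × {r : Fin 4 // r ≠ i}) (E0 k d hd i) :=
  (sumAlgEquiv k (Fin 4) (CoefIdx d)).symm.trans
    ((renameEquiv k (splitAll d hd i)).trans (sumAlgEquiv k _ _))

lemma eqC_X (r : Fin 4) : eqC k d hd i (X r) = C (X (Sum.inl r)) := by
  simp [eqC, splitAll]

lemma eqC_v (p) : eqC k d hd i (C (X (vIdx d hd i p))) = X p := by
  simp [eqC, splitAll, splitIdx_v]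

lemma eqC_w (c : WIdx d hd i) : eqC k d hd i (C (X c.1)) = C (X (Sum.inr c)) := by
  simp [eqC, splitAll, splitIdx_w]

/-- Constructor for coefficient indices. -/
def mkIdx (j : Fin 2) (α : Fin 4 →₀ ℕ) (h : (α.sum fun _ e => e) = d j) : CoefIdx d :=
  ⟨j, ⟨α, h⟩⟩

lemma genF_eq (j : Fin 2) : genF k d j =
    ∑ α ∈ (Finset.finsuppAntidiag (Finset.univ : Finset (Fin 4)) (d j)).attach,
      monomial α.1 (X (mkIdx d j α.1 (Finset.mem_finsuppAntidiag'.mp α.2).1)) := rfl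

lemma eqC_pderiv (j : Fin 2) (r : {r : Fin 4 // r ≠ i}) :
    ∃ g : E0 k d hd i, eqC k d hd i (pderiv r.1 (genF k d j)) =
      X (j, r) * C (X (Sum.inl i) ^ (d j - 1)) + C g := by
  classical
  let α0 : Fin 4 →₀ ℕ := Finsupp.single i (d j - 1) + Finsupp.single r.1 1
  have hα0' : (α0.sum fun _ e => e) = d j := (vIdx d hd i (j, r)).2.2
  have hα0 : α0 ∈ Finset.finsuppAntidiag (Finset.univ : Finset (Fin 4)) (d j) :=
    Finset.mem_finsuppAntidiag'.mpr ⟨hα0', by simp⟩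
  have hmon : ∀ (β : Fin 4 →₀ ℕ), eqC k d hd i (monomial β 1) ∈
      (C : E0 k d hd i →+* MvPolynomial (Fin 2 × {r : Fin 4 // r ≠ i}) _).range := by
    intro β
    rw [monomial_eq, map_mul, Finsupp.prod, map_prod]
    refine mul_mem (by simp) (prod_mem fun t _ => ?_)
    rw [map_pow, eqC_X]
    exact pow_mem (RingHom.mem_range_self _ _) _
  have hsplit : ∀ (β : Fin 4 →₀ ℕ) (c : CoefIdx d) (n : ℕ),
      (monomial β (X c * (n : Aring k d)) : Cring k d) =
        C (X c) * ((n : Cring k d) * monomial β 1) := by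
    intro β c n
    rw [← C_mul_monomial, ← mul_one (n : Aring k d), ← C_mul_monomial]
    simp
  have hrest : eqC k d hd i (pderiv r.1 (genF k d j)) -
      X (j, r) * C (X (Sum.inl i) ^ (d j - 1)) ∈
      (C : E0 k d hd i →+* MvPolynomial (Fin 2 × {r : Fin 4 // r ≠ i}) _).range := by
    rw [genF_eq, map_sum, map_sum, ← Finset.add_sum_erase _ _ (Finset.mem_attach _ ⟨α0, hα0⟩),
      add_sub_right_comm]
    refine add_mem ?_ (sum_mem fun α hα => ?_)
    · convert Subring.zero_mem _
      rw [sub_eq_zero, pderiv_monomial, hsplit, map_mul]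
      congr 1
      · exact eqC_v k d hd i (j, r)
      · have h1 : α0 r.1 = 1 := by
          simp [α0, r.2.symm]
        have h2 : α0 - Finsupp.single r.1 1 = Finsupp.single i (d j - 1) := by
          simp [α0]
        rw [h1, h2, Nat.cast_one, one_mul, ← X_pow_eq_monomial, map_pow, eqC_X, map_pow]
    · rw [pderiv_monomial, hsplit, map_mul]
      by_cases hc : mkIdx d j α.1 (Finset.mem_finsuppAntidiag'.mp α.2).1 ∈
          Set.range (vIdx d hd i)
      · obtain ⟨⟨a, s⟩, h⟩ := hc
        obtain rfl : a = j := congrArg Sigma.fst h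
        have h2 := congrArg Subtype.val (eq_of_heq (Sigma.mk.inj h).2)
        have hsr : s ≠ r := by
          rintro rfl
          exact (Finset.ne_of_mem_erase hα) (Subtype.ext h2.symm)
        have hz : α.1 r.1 = 0 := by
          rw [← h2]
          have : s.1 ≠ r.1 := fun h => hsr (Subtype.ext h)
          simp [r.2.symm, this]
        rw [hz]
        simp
      · refine mul_mem ?_ ?_
        · have := eqC_w k d hd i ⟨_, hc⟩
          exact ⟨_, this.symm⟩
        · rw [map_mul, map_natCast]
          exact mul_mem (natCast_mem _ _) (hmon _)
  obtain ⟨g, hg⟩ := hrest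
  exact ⟨g, by rw [hg]; ring⟩

/-- The localized base ring. -/
abbrev B0 : Type _ := Localization.Away (X (Sum.inl i) : E0 k d hd i)

/-- The map to the localized polynomial ring. -/
noncomputable def toM : Cring k d →+*
    MvPolynomial (Fin 2 × {r : Fin 4 // r ≠ i}) (B0 k d hd i) :=
  (map (algebraMap (E0 k d hd i) (B0 k d hd i))).comp (eqC k d hd i : Cring k d →+* _)

lemma exists_equiv : ∃ E : Localization.Away (X i : Cring k d) ≃+*
    MvPolynomial (Fin 2 × {r : Fin 4 // r ≠ i}) (B0 k d hd i),
    ∀ p, E (algebraMap _ _ p) = toM k d hd i p := by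
  letI : Algebra (MvPolynomial (Fin 2 × {r : Fin 4 // r ≠ i}) (E0 k d hd i))
      (MvPolynomial (Fin 2 × {r : Fin 4 // r ≠ i}) (B0 k d hd i)) :=
    MvPolynomial.algebraMvPolynomial
  have h1 : IsLocalization ((Submonoid.powers (X (Sum.inl i) : E0 k d hd i)).map
      (C : E0 k d hd i →+* MvPolynomial (Fin 2 × {r : Fin 4 // r ≠ i}) _))
      (MvPolynomial (Fin 2 × {r : Fin 4 // r ≠ i}) (B0 k d hd i)) := inferInstance
  let E := IsLocalization.ringEquivOfRingEquiv
    (M := Submonoid.powers (X i : Cring k d))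
    (T := (Submonoid.powers (X (Sum.inl i) : E0 k d hd i)).map
      (C : E0 k d hd i →+* MvPolynomial (Fin 2 × {r : Fin 4 // r ≠ i}) _))
    (Localization.Away (X i : Cring k d))
    (MvPolynomial (Fin 2 × {r : Fin 4 // r ≠ i}) (B0 k d hd i))
    (eqC k d hd i).toRingEquiv
    (by
      rw [Submonoid.map_powers, Submonoid.map_powers]
      congr 1
      exact eqC_X k d hd i i)
  refine ⟨E, fun p => ?_⟩
  rw [IsLocalization.ringEquivOfRingEquiv_eq]
  rfl

end Specific

/-- **Lemma.** If `k` is a domain then for each `i`, the ideal of the localization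
`C_{x_i}` generated by the three Jacobian minors `J_{r,s}` with `r < s` and
`r, s ≠ i` is a prime ideal. -/
theorem Jmin_span_isPrime (k : Type*) [CommRing k] [IsDomain k] (d : Fin 2 → ℕ)
    (hd : ∀ i, 0 < d i) (i : Fin 4) :
    (Ideal.span ((algebraMap (Cring k d) (Localization.Away (X i : Cring k d))) ''
      {p | ∃ r s : Fin 4, r < s ∧ r ≠ i ∧ s ≠ i ∧ p = Jmin k d r s})).IsPrime := by
  classical
  obtain ⟨E, hE⟩ := exists_equiv k d hd i
  choose g hg using fun p : Fin 2 × {r : Fin 4 // r ≠ i} => eqC_pderiv k d hd i p.1 p.2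
  have hu : ∀ n : ℕ, IsUnit ((algebraMap (E0 k d hd i) (B0 k d hd i)) (X (Sum.inl i) ^ n)) := by
    intro n
    rw [map_pow]
    exact (IsLocalization.Away.algebraMap_isUnit _).pow n
  let τ := affEquiv (fun p : Fin 2 × {r : Fin 4 // r ≠ i} => (hu (d p.1 - 1)).unit)
    (fun p => algebraMap (E0 k d hd i) (B0 k d hd i) (g p))
  have hτ : ∀ j (r : {r : Fin 4 // r ≠ i}),
      toM k d hd i (pderiv r.1 (genF k d j)) = τ (X (j, r)) := by
    intro j r
    rw [affEquiv_X, toM, RingHom.comp_apply]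
    have := hg (j, r)
    simp only at this
    rw [RingHom.coe_coe, this]
    simp
  let Θ : _ ≃+* _ := E.trans τ.symm.toRingEquiv
  have hΘ : ∀ r s : {r : Fin 4 // r ≠ i}, Θ (algebraMap _ _ (Jmin k d r.1 s.1)) =
      X (0, r) * X (1, s) - X (0, s) * X (1, r) := by
    intro r s
    change τ.symm (E _) = _
    rw [hE, AlgEquiv.symm_apply_eq, Jmin]
    simp only [map_sub, map_mul, hτ]
  have hdom : IsDomain (B0 k d hd i) :=
    IsLocalization.isDomain_localization
      (powers_le_nonZeroDivisors_of_noZeroDivisors (X_ne_zero _))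
  have hset : (algebraMap (Cring k d) (Localization.Away (X i : Cring k d))) ''
      {p | ∃ r s : Fin 4, r < s ∧ r ≠ i ∧ s ≠ i ∧ p = Jmin k d r s} =
      {p | ∃ r s : {r : Fin 4 // r ≠ i}, r < s ∧
        p = algebraMap (Cring k d) (Localization.Away (X i : Cring k d)) (Jmin k d r.1 s.1)} := by
    ext p
    constructor
    · rintro ⟨_, ⟨r, s, hrs, hr, hs, rfl⟩, rfl⟩
      exact ⟨⟨r, hr⟩, ⟨s, hs⟩, hrs, rfl⟩
    · rintro ⟨r, s, hrs, rfl⟩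
      exact ⟨_, ⟨r.1, s.1, hrs, r.2, s.2, rfl⟩, rfl⟩
  rw [hset]
  exact isPrime_of_equiv Θ _ hΘ
end

section
/- Assume k is an integral domain. Then for each i ∈ {1,2,3,4}, the localization B_{x_i} of B = C/𝒟 at the powers of the image of x_i is an integral domain. -/
set_option maxSynthPendingDepth 3

open MvPolynomial

theorem multiset_segre {ι κ S : Type*} [CommRing S] (w : ι × κ → S)
    (hw : ∀ i j r s, w (i, r) * w (j, s) = w (i, s) * w (j, r)) (M : Multiset (ι × κ)) :
    ∀ N : Multiset (ι × κ), M.map Prod.fst = N.map Prod.fst → M.map Prod.snd = N.map Prod.snd →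
      (M.map w).prod = (N.map w).prod := by
  classical
  induction M using Multiset.induction_on with
  | empty =>
    intro N h1 _
    have : N = 0 := by simpa using h1.symm
    simp [this]
  | cons a M ih =>
    intro N h1 h2
    obtain ⟨i, r⟩ := a
    by_cases hm : (i, r) ∈ N
    · obtain ⟨N', rfl⟩ := Multiset.exists_cons_of_mem hm
      simp only [Multiset.map_cons, Multiset.cons_inj_right] at h1 h2
      simp only [Multiset.map_cons, Multiset.prod_cons, ih N' h1 h2]
    · have hi : i ∈ N.map Prod.fst := by rw [← h1]; simp
      have hr : r ∈ N.map Prod.snd := by rw [← h2]; simp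
      obtain ⟨⟨i', s⟩, hN1, h⟩ := Multiset.mem_map.1 hi
      obtain rfl : i' = i := h
      obtain ⟨⟨j, r'⟩, hN2, h⟩ := Multiset.mem_map.1 hr
      obtain rfl : r' = r := h
      obtain ⟨N', rfl⟩ := Multiset.exists_cons_of_mem hN1
      have hN3 : (j, r') ∈ N' := by
        rcases Multiset.mem_cons.1 hN2 with h | h
        · exfalso
          apply hm
          have : r' = s := (Prod.ext_iff.1 h).2
          subst this
          simp
        · exact h
      obtain ⟨N'', rfl⟩ := Multiset.exists_cons_of_mem hN3
      have key := ih ((j, s) ::ₘ N'') (by simpa using h1) (by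
        simp only [Multiset.map_cons] at h2 ⊢
        rw [Multiset.cons_swap] at h2
        simpa using h2)
      simp only [Multiset.map_cons, Multiset.prod_cons] at key ⊢
      rw [key, ← mul_assoc, ← mul_assoc, hw i' j r' s]

theorem monomial_toFinsupp' {σ R : Type*} [CommRing R] [DecidableEq σ] (M : Multiset σ) :
    (monomial (Multiset.toFinsupp M) 1 : MvPolynomial σ R) = (M.map X).prod := by
  induction M using Multiset.induction_on with
  | empty => simp
  | cons a M ih =>
    rw [Multiset.map_cons, Multiset.prod_cons, ← ih, ← Multiset.singleton_add, map_add,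
      Multiset.toFinsupp_singleton, X, monomial_mul, one_mul]

/-- The two marginals of a multiset of pairs, put together. -/
def marg {ι κ : Type*} (M : Multiset (ι × κ)) : Multiset (ι ⊕ κ) :=
  M.map (fun c => Sum.inl c.1) + M.map (fun c => Sum.inr c.2)

theorem marg_left {ι κ : Type*} (M : Multiset (ι × κ)) :
    (marg M).filterMap Sum.getLeft? = M.map Prod.fst := by
  simp only [marg, Multiset.filterMap_add, Multiset.filterMap_map]
  induction M using Multiset.induction_on with
  | empty => simp
  | cons a M ih => simpa [Multiset.filterMap_cons, Function.comp_def] using ih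

theorem marg_right {ι κ : Type*} (M : Multiset (ι × κ)) :
    (marg M).filterMap Sum.getRight? = M.map Prod.snd := by
  simp only [marg, Multiset.filterMap_add, Multiset.filterMap_map]
  induction M using Multiset.induction_on with
  | empty => simp
  | cons a M ih => simpa [Multiset.filterMap_cons, Function.comp_def] using ih

theorem segre_ker {ι κ R S : Type*} [CommRing R] [CommRing S] (f : R →+* S) (w : ι × κ → S)
    (hw : ∀ i j r s, w (i, r) * w (j, s) = w (i, s) * w (j, r))
    (p : MvPolynomial (ι × κ) R)
    (hp : aeval (fun c : ι × κ => (X (Sum.inl c.1) * X (Sum.inr c.2) : MvPolynomial (ι ⊕ κ) R)) p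
      = 0) : eval₂Hom f w p = 0 := by
  classical
  let := f.toAlgebra
  have hF : ∀ M, Function.extend marg (fun M => (M.map w).prod) 0 (marg M) = (M.map w).prod := by
    intro M
    have : Function.FactorsThrough (fun M : Multiset (ι × κ) => (M.map w).prod) marg := by
      intro M N h
      apply multiset_segre w hw
      · rw [← marg_left, ← marg_left, h]
      · rw [← marg_right, ← marg_right, h]
    exact this.extend_apply 0 M
  let F : (ι ⊕ κ →₀ ℕ) → S := fun m =>
    Function.extend marg (fun M => (M.map w).prod) 0 (Finsupp.toMultiset m)
  let T : MvPolynomial (ι ⊕ κ) R →ₗ[R] S := (basisMonomials _ R).constr R F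
  have hT : ∀ m, T (monomial m 1) = F m := by
    intro m
    have := (basisMonomials (ι ⊕ κ) R).constr_basis R F m
    simpa using this
  have key : (aeval w : MvPolynomial (ι × κ) R →ₐ[R] S).toLinearMap = T ∘ₗ (aeval (fun c : ι × κ => (X (Sum.inl c.1) * X (Sum.inr c.2) : MvPolynomial (ι ⊕ κ) R))).toLinearMap := by
    refine (basisMonomials (ι × κ) R).ext fun m => ?_
    obtain ⟨M, rfl⟩ : ∃ M, Multiset.toFinsupp M = m := ⟨Finsupp.toMultiset m, by simp⟩
    rw [coe_basisMonomials]
    simp only [AlgHom.toLinearMap_apply, LinearMap.comp_apply, monomial_toFinsupp',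
      map_multiset_prod, Multiset.map_map, Function.comp_def, aeval_X]
    have : (Multiset.map (fun c : ι × κ => (X (Sum.inl c.1) * X (Sum.inr c.2) : MvPolynomial (ι ⊕ κ) R)) M).prod = monomial (Multiset.toFinsupp (marg M)) 1 := by
      rw [monomial_toFinsupp', marg, Multiset.map_add, Multiset.prod_add, Multiset.prod_map_mul,
        Multiset.map_map, Multiset.map_map]
      rfl
    rw [this, hT]
    simp only [F, Multiset.toFinsupp_toMultiset, hF]
  have := LinearMap.congr_fun key p
  rw [LinearMap.comp_apply, AlgHom.toLinearMap_apply, AlgHom.toLinearMap_apply, hp, map_zero] at this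
  exact this

/-- The special exponents `(d-1) e_i + e_r`. -/
noncomputable def spExp (n : ℕ) (i r : Fin 4) : Fin 4 →₀ ℕ :=
  Finsupp.single i (n - 1) + Finsupp.single r 1

theorem spExp_sum {n : ℕ} (hn : 0 < n) (i r : Fin 4) :
    ((spExp n i r).sum fun _ e => e) = n := by
  rw [spExp, Finsupp.sum_add_index' (by simp) (by simp), Finsupp.sum_single_index rfl,
    Finsupp.sum_single_index rfl]
  omega

theorem spExp_inj (n : ℕ) (i : Fin 4) : Function.Injective (spExp n i) := by
  intro r s h
  have := add_left_cancel h
  exact (Finsupp.single_left_inj one_ne_zero).1 this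

/-- The special coefficient indices. -/
noncomputable def sp {d : Fin 2 → ℕ} (hd : ∀ j, 0 < d j) (i : Fin 4) (c : Fin 2 × Fin 4) :
    CoefIdx d := ⟨c.1, ⟨spExp (d c.1) i c.2, spExp_sum (hd c.1) i c.2⟩⟩

theorem sp_inj {d : Fin 2 → ℕ} (hd : ∀ j, 0 < d j) (i : Fin 4) :
    Function.Injective (sp hd i) := by
  rintro ⟨j, r⟩ ⟨j', s⟩ h
  obtain rfl : j = j' := congrArg Sigma.fst h
  have h2 := eq_of_heq (Sigma.mk.inj h).2
  have : r = s := spExp_inj _ _ (congrArg Subtype.val h2)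
  rw [this]

/-- The remaining coefficient indices. -/
abbrev Oth {d : Fin 2 → ℕ} (hd : ∀ j, 0 < d j) (i : Fin 4) : Type :=
  {c : CoefIdx d // c ∉ Set.range (sp hd i)}

/-- The polynomial ring in the `x`'s and the remaining coefficients. -/
abbrev Rring (k : Type*) [CommRing k] {d : Fin 2 → ℕ} (hd : ∀ j, 0 < d j) (i : Fin 4) : Type _ :=
  MvPolynomial (Fin 4 ⊕ Oth hd i) k

/-- Its inclusion in `C`. -/
noncomputable def incl (k : Type*) [CommRing k] {d : Fin 2 → ℕ} (hd : ∀ j, 0 < d j) (i : Fin 4) :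
    Rring k hd i →+* Cring k d :=
  eval₂Hom (C.comp C) (Sum.elim X (fun o => C (X o.1)))

theorem genF_decomp (k : Type*) [CommRing k] {d : Fin 2 → ℕ} (hd : ∀ j, 0 < d j) (i : Fin 4)
    (j : Fin 2) : ∃ h : Rring k hd i, genF k d j =
      ∑ r, C (X (sp hd i (j, r))) * X i ^ (d j - 1) * X r + incl k hd i h := by
  classical
  suffices hs : genF k d j - ∑ r, C (X (sp hd i (j, r))) * X i ^ (d j - 1) * X r ∈
      (incl k hd i).range by
    obtain ⟨h, hh⟩ := hs
    exact ⟨h, by rw [hh]; ring⟩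
  let F : (Fin 4 →₀ ℕ) → Cring k d := fun α =>
    if h : (α.sum fun _ e => e) = d j then monomial α (X (⟨j, ⟨α, h⟩⟩ : CoefIdx d)) else 0
  have h1 : genF k d j = ∑ α ∈ Finset.finsuppAntidiag (Finset.univ : Finset (Fin 4)) (d j), F α := by
    rw [← Finset.sum_attach, genF]
    refine Finset.sum_congr rfl fun α _ => ?_
    simp only [F]
    rw [dif_pos]
  have hsub : Finset.univ.image (spExp (d j) i) ⊆
      Finset.finsuppAntidiag (Finset.univ : Finset (Fin 4)) (d j) := by
    intro α hα
    obtain ⟨r, -, rfl⟩ := Finset.mem_image.1 hα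
    exact Finset.mem_finsuppAntidiag'.2 ⟨spExp_sum (hd j) i r, by simp⟩
  have h2 : ∑ α ∈ Finset.univ.image (spExp (d j) i), F α =
      ∑ r, C (X (sp hd i (j, r))) * X i ^ (d j - 1) * X r := by
    rw [Finset.sum_image (fun a _ b _ h => spExp_inj _ _ h)]
    refine Finset.sum_congr rfl fun r _ => ?_
    simp only [F]
    rw [dif_pos (spExp_sum (hd j) i r)]
    have hX : (X r : Cring k d) = monomial (Finsupp.single r 1) 1 := rfl
    rw [X_pow_eq_monomial, C_mul_monomial, hX, monomial_mul, mul_one, mul_one]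
    rfl
  rw [h1, ← Finset.sum_sdiff hsub, h2, add_sub_cancel_right]
  refine Subring.sum_mem _ fun α hα => ?_
  obtain ⟨hα1, hα2⟩ := Finset.mem_sdiff.1 hα
  have hs := (Finset.mem_finsuppAntidiag'.1 hα1).1
  simp only [F]
  rw [dif_pos hs]
  have ho : (⟨j, ⟨α, hs⟩⟩ : CoefIdx d) ∉ Set.range (sp hd i) := by
    rintro ⟨⟨j', r⟩, h⟩
    obtain rfl : j' = j := congrArg Sigma.fst h
    have h2 := eq_of_heq (Sigma.mk.inj h).2
    exact hα2 (Finset.mem_image.2 ⟨r, Finset.mem_univ _, congrArg Subtype.val h2⟩)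
  rw [monomial_eq]
  refine Subring.mul_mem _ ⟨X (Sum.inr ⟨_, ho⟩), by simp [incl]⟩ ?_
  refine Subring.prod_mem _ fun r _ => Subring.pow_mem _ ?_ _
  exact RingHom.mem_range.2 ⟨X (Sum.inl r), by simp [incl]⟩

theorem pderiv_incl (k : Type*) [CommRing k] {d : Fin 2 → ℕ} (hd : ∀ j, 0 < d j) (i r : Fin 4)
    (h : Rring k hd i) : ∃ g : Rring k hd i, pderiv r (incl k hd i h) = incl k hd i g := by
  classical
  induction h using MvPolynomial.induction_on with
  | C a => exact ⟨0, by simp [incl]⟩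
  | add p q hp hq =>
    obtain ⟨g, hg⟩ := hp
    obtain ⟨g', hg'⟩ := hq
    exact ⟨g + g', by simp [hg, hg']⟩
  | mul_X p n hp =>
    obtain ⟨g, hg⟩ := hp
    have : ∃ g' : Rring k hd i, pderiv r (incl k hd i (X n)) = incl k hd i g' := by
      rcases n with s | o
      · refine ⟨C (Pi.single (M := fun _ => k) s 1 r), ?_⟩
        simp only [incl, eval₂Hom_X', Sum.elim_inl, pderiv_X]
        by_cases hrs : r = s
        · subst hrs; simp
        · rw [Pi.single_eq_of_ne hrs, Pi.single_eq_of_ne]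
          · simp
          · first | exact hrs | exact Ne.symm hrs
      · exact ⟨0, by simp [incl]⟩
    obtain ⟨g', hg'⟩ := this
    refine ⟨g * X n + p * g', ?_⟩
    rw [map_mul, Derivation.leibniz, hg, hg', smul_eq_mul, smul_eq_mul, map_add, map_mul, map_mul]
    ring

theorem genF_pderiv (k : Type*) [CommRing k] {d : Fin 2 → ℕ} (hd : ∀ j, 0 < d j) (i : Fin 4)
    (j : Fin 2) (r : Fin 4) (hr : r ≠ i) : ∃ g : Rring k hd i, pderiv r (genF k d j) =
      C (X (sp hd i (j, r))) * X i ^ (d j - 1) + incl k hd i g := by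
  classical
  obtain ⟨h, hh⟩ := genF_decomp k hd i j
  obtain ⟨g, hg⟩ := pderiv_incl k hd i r h
  refine ⟨g, ?_⟩
  rw [hh, map_add, hg, map_sum, Finset.sum_eq_single r]
  · simp [Derivation.leibniz, pderiv_X_of_ne (Ne.symm hr), Derivation.leibniz_pow]
  · intro s _ hs
    simp [Derivation.leibniz, pderiv_X_of_ne (Ne.symm hr), pderiv_X_of_ne hs, Derivation.leibniz_pow]
  · simp

theorem genF_hom (k : Type*) [CommRing k] (d : Fin 2 → ℕ) (j : Fin 2) :
    (genF k d j).IsHomogeneous (d j) := by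
  refine IsHomogeneous.sum _ _ _ fun α _ => isHomogeneous_monomial _ ?_
  exact (Finset.mem_finsuppAntidiag'.mp α.2).1

theorem exists_Phi (k : Type*) [CommRing k] {d : Fin 2 → ℕ} (hd : ∀ j, 0 < d j) (i : Fin 4)
    {L : Type*} [Field L] (ρ : Rring k hd i →+* L) (hρ : ρ (X (Sum.inl i)) ≠ 0)
    (a : Fin 2 → L) (b : {r : Fin 4 // r ≠ i} → L) :
    ∃ Φ : Cring k d →+* L, Φ.comp (incl k hd i) = ρ ∧ (∀ p ∈ Dideal k d, Φ p = 0) ∧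
      ∀ j (r : {r : Fin 4 // r ≠ i}), Φ (pderiv r.1 (genF k d j)) = a j * b r := by
  classical
  choose h hh using genF_decomp k hd i
  choose g hg using genF_pderiv k hd i
  let x : Fin 4 → L := fun r => ρ (X (Sum.inl r))
  have hx : x i ≠ 0 := hρ
  let v0 : Fin 2 → {r : Fin 4 // r ≠ i} → L := fun j r =>
    (a j * b r - ρ (g j r.1 r.2)) / x i ^ (d j - 1)
  let v1 : Fin 2 → L := fun j =>
    -((∑ r : {r : Fin 4 // r ≠ i}, v0 j r * x i ^ (d j - 1) * x r.1) + ρ (h j)) / x i ^ (d j)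
  let v : Fin 2 × Fin 4 → L := fun c => if hr : c.2 ≠ i then v0 c.1 ⟨c.2, hr⟩ else v1 c.1
  let u : CoefIdx d → L := Function.extend (sp hd i) v
    (fun c => if hc : c ∉ Set.range (sp hd i) then ρ (X (Sum.inr ⟨c, hc⟩)) else 0)
  let Φ : Cring k d →+* L := eval₂Hom (eval₂Hom (ρ.comp C) u) x
  have hΦX : ∀ r, Φ (X r) = x r := fun r => by simp [Φ]
  have hΦU : ∀ c, Φ (C (X c)) = u c := fun c => by simp [Φ]
  have huK : ∀ j (r : {r : Fin 4 // r ≠ i}), u (sp hd i (j, r.1)) = v0 j r := by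
    intro j r
    simp only [u]
    rw [(sp_inj hd i).extend_apply]
    simp only [v]
    rw [dif_pos r.2]
  have hui : ∀ j, u (sp hd i (j, i)) = v1 j := by
    intro j
    simp only [u]
    rw [(sp_inj hd i).extend_apply]
    simp only [v]
    rw [dif_neg (by simp)]
  have hincl : Φ.comp (incl k hd i) = ρ := by
    apply MvPolynomial.ringHom_ext
    · intro c
      simp [Φ, incl]
    · rintro (r | o)
      · simp [Φ, incl, x]
      · have : u o.1 = ρ (X (Sum.inr o)) := by
          simp only [u]
          rw [Function.extend_apply' _ _ _ o.2, dif_pos o.2]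
        simp [Φ, incl, this]
  have hincl' : ∀ p, Φ (incl k hd i p) = ρ p := fun p => RingHom.congr_fun hincl p
  have hder : ∀ j (r : {r : Fin 4 // r ≠ i}), Φ (pderiv r.1 (genF k d j)) = a j * b r := by
    intro j r
    rw [hg j r.1 r.2, map_add, map_mul, map_pow, hΦU, hΦX, hincl', huK]
    simp only [v0]
    rw [div_mul_cancel₀ _ (pow_ne_zero _ hx)]
    ring
  have hf : ∀ j, Φ (genF k d j) = 0 := by
    intro j
    rw [hh j, map_add, map_sum, Fintype.sum_eq_add_sum_subtype_ne _ i]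
    simp only [map_mul, map_pow, hΦU, hΦX, hincl', huK, hui]
    rw [mul_assoc, pow_sub_one_mul (hd j).ne']
    have : v1 j * x i ^ d j =
      -((∑ r : {r : Fin 4 // r ≠ i}, v0 j r * x i ^ (d j - 1) * x r.1) + ρ (h j)) := by
      simp only [v1]
      rw [div_mul_cancel₀ _ (pow_ne_zero _ hx)]
    rw [this]
    ring
  have hderi : ∀ j, Φ (pderiv i (genF k d j)) =
      a j * (-(∑ r : {r : Fin 4 // r ≠ i}, x r.1 * b r) / x i) := by
    intro j
    have h1 := congrArg Φ (genF_hom k d j).sum_X_mul_pderiv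
    rw [map_nsmul, hf, smul_zero, map_sum, Fintype.sum_eq_add_sum_subtype_ne _ i] at h1
    simp only [map_mul, hΦX, hder] at h1
    have h2 : ∑ r : {r : Fin 4 // r ≠ i}, x r.1 * (a j * b r) =
        a j * ∑ r : {r : Fin 4 // r ≠ i}, x r.1 * b r := by
      rw [Finset.mul_sum]
      exact Finset.sum_congr rfl fun r _ => by ring
    rw [h2] at h1
    field_simp
    linear_combination h1
  obtain ⟨β, hβ⟩ : ∃ β : Fin 4 → L, ∀ j r, Φ (pderiv r (genF k d j)) = a j * β r := by
    refine ⟨fun r => if hr : r ≠ i then b ⟨r, hr⟩ else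
      (-(∑ r : {r : Fin 4 // r ≠ i}, x r.1 * b r) / x i), fun j r => ?_⟩
    by_cases hr : r ≠ i
    · simp only [dif_pos hr]
      exact hder j ⟨r, hr⟩
    · simp only [dif_neg hr]
      obtain rfl : r = i := not_not.1 hr
      exact hderi j
  refine ⟨Φ, hincl, fun p hp => ?_, hder⟩
  have : Dideal k d ≤ RingHom.ker Φ := by
    rw [Dideal, Ideal.span_le]
    rintro q ((rfl | rfl) | ⟨r, s, -, rfl⟩)
    · exact hf 0
    · exact hf 1
    · change Φ _ = 0
      rw [Jmin, map_sub, map_mul, map_mul, hβ, hβ, hβ, hβ]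
      ring
  exact this hp

/-- The comparison map from polynomials in the derivatives. -/
noncomputable def sig (k : Type*) [CommRing k] {d : Fin 2 → ℕ} (hd : ∀ j, 0 < d j) (i : Fin 4)
    {S : Type*} [CommRing S] (π : Cring k d →+* S) :
    MvPolynomial (Fin 2 × {r : Fin 4 // r ≠ i}) (Rring k hd i) →+* S :=
  eval₂Hom (π.comp (incl k hd i)) (fun c => π (pderiv c.2.1 (genF k d c.1)))

theorem exists_sig (k : Type*) [CommRing k] {d : Fin 2 → ℕ} (hd : ∀ j, 0 < d j) (i : Fin 4)
    {S : Type*} [CommRing S] (π : Cring k d →+* S) (hπ : ∀ j, π (genF k d j) = 0)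
    (c : Cring k d) : ∃ (N : ℕ) (p : _), π (X i) ^ N * π c = sig k hd i π p := by
  classical
  choose h hh using genF_decomp k hd i
  choose g hg using genF_pderiv k hd i
  have hsC : ∀ p, sig k hd i π (C p) = π (incl k hd i p) := fun p => by simp [sig]
  have hsx : ∀ r, sig k hd i π (C (X (Sum.inl r))) = π (X r) := fun r => by
    rw [hsC]; simp [incl]
  have hsX : ∀ j (r : {r : Fin 4 // r ≠ i}),
      sig k hd i π (X (j, r)) = π (pderiv r.1 (genF k d j)) := fun j r => by simp [sig]
  have hadd : ∀ c c' : Cring k d, (∃ (N : ℕ) (p : _), π (X i) ^ N * π c = sig k hd i π p) →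
      (∃ (N : ℕ) (p : _), π (X i) ^ N * π c' = sig k hd i π p) →
      (∃ (N : ℕ) (p : _), π (X i) ^ N * π (c + c') = sig k hd i π p) := by
    rintro c c' ⟨N, p, hp⟩ ⟨N', p', hp'⟩
    refine ⟨N + N', C (X (Sum.inl i)) ^ N' * p + C (X (Sum.inl i)) ^ N * p', ?_⟩
    rw [map_add, map_add, map_mul, map_mul, map_pow, map_pow, hsx, ← hp, ← hp']
    ring
  have hmul : ∀ c c' : Cring k d, (∃ (N : ℕ) (p : _), π (X i) ^ N * π c = sig k hd i π p) →
      (∃ (N : ℕ) (p : _), π (X i) ^ N * π c' = sig k hd i π p) →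
      (∃ (N : ℕ) (p : _), π (X i) ^ N * π (c * c') = sig k hd i π p) := by
    rintro c c' ⟨N, p, hp⟩ ⟨N', p', hp'⟩
    refine ⟨N + N', p * p', ?_⟩
    rw [map_mul, map_mul, ← hp, ← hp']
    ring
  have hW : ∀ j (r : {r : Fin 4 // r ≠ i}), π (X i) ^ (d j - 1) * π (C (X (sp hd i (j, r.1)))) =
      sig k hd i π (X (j, r) - C (g j r.1 r.2)) := by
    intro j r
    rw [map_sub, hsX, hsC, hg j r.1 r.2, map_add, map_mul, map_pow]
    ring
  have hV : ∀ j, π (X i) ^ (d j) * π (C (X (sp hd i (j, i)))) =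
      sig k hd i π (-(∑ r : {r : Fin 4 // r ≠ i},
        (X (j, r) - C (g j r.1 r.2)) * C (X (Sum.inl r.1)) + C (h j))) := by
    intro j
    have h0 := hπ j
    rw [hh j, map_add, map_sum, Fintype.sum_eq_add_sum_subtype_ne _ i] at h0
    have h1 : ∀ r : {r : Fin 4 // r ≠ i},
        π (C (X (sp hd i (j, r.1))) * X i ^ (d j - 1) * X r.1) =
        sig k hd i π ((X (j, r) - C (g j r.1 r.2)) * C (X (Sum.inl r.1))) := by
      intro r
      rw [map_mul, map_mul, map_pow, map_mul (sig k hd i π), ← hW, hsx]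
      ring
    simp only [h1] at h0
    rw [map_neg, map_add, map_sum, hsC]
    rw [map_mul, map_mul, map_pow, mul_assoc, pow_sub_one_mul (hd j).ne'] at h0
    linear_combination h0
  induction c using MvPolynomial.induction_on with
  | add p q hp hq => exact hadd _ _ hp hq
  | mul_X p n hp => exact hmul _ _ hp ⟨0, C (X (Sum.inl n)), by rw [hsx]; ring⟩
  | C a =>
    induction a using MvPolynomial.induction_on with
    | C a => exact ⟨0, C (C a), by rw [hsC]; simp [incl]⟩
    | add p q hp hq => rw [map_add]; exact hadd _ _ hp hq
    | mul_X p n hp =>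
      rw [map_mul]
      refine hmul _ _ hp ?_
      by_cases hn : n ∈ Set.range (sp hd i)
      · obtain ⟨⟨j, r⟩, rfl⟩ := hn
        by_cases hr : r = i
        · subst hr
          exact ⟨_, _, hV j⟩
        · exact ⟨_, _, hW j ⟨r, hr⟩⟩
      · exact ⟨0, C (X (Sum.inr ⟨n, hn⟩)), by rw [hsC]; simp [incl]⟩

/-- **Proposition.** If `k` is a domain then for each `i`, the localization `B_{x_i}`
of `B = C/𝒟` at the powers of the image of `x_i` is an integral domain. -/
theorem B_localization_isDomain (k : Type*) [CommRing k] [IsDomain k] (d : Fin 2 → ℕ)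
    (hd : ∀ i, 0 < d i) (i : Fin 4) :
    IsDomain (Localization.Away
      (Ideal.Quotient.mk (Dideal k d) (X i : Cring k d))) := by
  classical
  let Q := MvPolynomial (Fin 2 ⊕ {r : Fin 4 // r ≠ i}) (Rring k hd i)
  let L := FractionRing Q
  let ρ : Rring k hd i →+* L := (algebraMap Q L).comp C
  have hinj : Function.Injective (algebraMap Q L) := IsFractionRing.injective Q L
  have hρ : ρ (X (Sum.inl i)) ≠ 0 := by
    intro h0
    have h1 : (C (X (Sum.inl i)) : Q) = 0 := hinj (by rw [map_zero]; exact h0)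
    exact X_ne_zero (R := k) (Sum.inl i : Fin 4 ⊕ Oth hd i)
      (C_injective _ _ (h1.trans (map_zero C).symm))
  obtain ⟨Φ, hΦ, hΦD, hΦd⟩ := exists_Phi k hd i ρ hρ
    (fun j => algebraMap Q L (X (Sum.inl j))) (fun r => algebraMap Q L (X (Sum.inr r)))
  have hΦi : Φ (X i) = ρ (X (Sum.inl i)) := by
    rw [← hΦ]; simp [incl]
  let B := Cring k d ⧸ Dideal k d
  let xi : B := Ideal.Quotient.mk (Dideal k d) (X i)
  let B' := Localization.Away xi
  let φ0 : B →+* L := Ideal.Quotient.lift (Dideal k d) Φ hΦD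
  have hφ0 : ∀ c, φ0 (Ideal.Quotient.mk (Dideal k d) c) = Φ c := fun c =>
    Ideal.Quotient.lift_mk _ _ _
  have hu : IsUnit (φ0 xi) := by
    rw [hφ0, hΦi]
    exact hρ.isUnit
  let φ : B' →+* L := IsLocalization.Away.lift xi hu
  have hφ : ∀ c, φ (algebraMap B B' c) = φ0 c := fun c => IsLocalization.Away.lift_eq xi hu c
  let π : Cring k d →+* B' := (algebraMap B B').comp (Ideal.Quotient.mk (Dideal k d))
  have hφπ : ∀ c, φ (π c) = Φ c := fun c => by
    rw [← hφ0, ← hφ]; rfl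
  have hπ0 : ∀ p ∈ Dideal k d, π p = 0 := fun p hp => by
    change algebraMap B B' (Ideal.Quotient.mk (Dideal k d) p) = 0
    rw [Ideal.Quotient.eq_zero_iff_mem.2 hp, map_zero]
  have hπf : ∀ j, π (genF k d j) = 0 := by
    intro j
    apply hπ0
    apply Ideal.subset_span
    left
    fin_cases j <;> simp
  have hJ : ∀ r s, π (Jmin k d r s) = 0 := by
    intro r s
    rcases lt_trichotomy r s with hrs | rfl | hrs
    · exact hπ0 _ (Ideal.subset_span (Or.inr ⟨r, s, hrs, rfl⟩))
    · simp [Jmin]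
    · have h1 := hπ0 _ (Ideal.subset_span (Or.inr ⟨s, r, hrs, rfl⟩) : Jmin k d s r ∈ Dideal k d)
      have h2 : Jmin k d r s = - Jmin k d s r := by
        simp only [Jmin]; ring
      rw [h2, map_neg, h1, neg_zero]
  have hxi : IsUnit (π (X i)) := IsLocalization.Away.algebraMap_isUnit xi
  have hcomp : ∀ p, φ (sig k hd i π p) = algebraMap Q L
      (aeval (fun c : Fin 2 × {r : Fin 4 // r ≠ i} =>
        (X (Sum.inl c.1) * X (Sum.inr c.2) : Q)) p) := by
    intro p
    have : φ.comp (sig k hd i π) = (algebraMap Q L).comp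
      (aeval (fun c : Fin 2 × {r : Fin 4 // r ≠ i} =>
        (X (Sum.inl c.1) * X (Sum.inr c.2) : Q)) :
        MvPolynomial (Fin 2 × {r : Fin 4 // r ≠ i}) (Rring k hd i) →ₐ[Rring k hd i] Q).toRingHom := by
      apply MvPolynomial.ringHom_ext
      · intro c
        have h1 : φ (sig k hd i π (C c)) = ρ c := by
          rw [← hΦ]
          simp [sig, hφπ]
        rw [RingHom.comp_apply, h1]
        simp [ρ, Q]
      · rintro ⟨j, r⟩
        have h1 : φ (sig k hd i π (X (j, r))) =
            algebraMap Q L (X (Sum.inl j)) * algebraMap Q L (X (Sum.inr r)) := by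
          rw [← hΦd]
          simp [sig, hφπ]
        rw [RingHom.comp_apply, h1, ← map_mul]
        simp [Q]
    exact RingHom.congr_fun this p
  have hφinj : Function.Injective φ := by
    rw [injective_iff_map_eq_zero]
    intro z hz
    obtain ⟨n, y, hy⟩ := IsLocalization.Away.surj xi z
    obtain ⟨c, rfl⟩ := Ideal.Quotient.mk_surjective y
    obtain ⟨N, p, hp⟩ := exists_sig k hd i π hπf c
    have hc : Φ c = 0 := by
      rw [← hφπ]
      change φ (algebraMap B B' (Ideal.Quotient.mk (Dideal k d) c)) = 0
      rw [← hy, map_mul, hz, zero_mul]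
    have h1 : φ (sig k hd i π p) = 0 := by
      rw [← hp, map_mul, hφπ, hc, mul_zero]
    rw [hcomp] at h1
    have h2 := hinj (h1.trans (map_zero _).symm)
    have h3 : sig k hd i π p = 0 := by
      refine segre_ker _ _ ?_ p h2
      intro j j' r s
      have hrs := hJ r.1 s.1
      rw [Jmin, map_sub, map_mul, map_mul] at hrs
      fin_cases j <;> fin_cases j' <;> simp only [Fin.zero_eta, Fin.mk_one]
      · ring
      · linear_combination hrs
      · linear_combination -hrs
      · ring
    rw [h3] at hp
    have h4 : π c = 0 := (hxi.pow N).mul_right_eq_zero.1 hp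
    have h5 : z * (π (X i)) ^ n = 0 := by
      rw [← h4]
      exact hy
    exact (hxi.pow n).mul_left_eq_zero.1 h5
  exact hφinj.isDomain φ
end

section
/- Assume k is an integral domain. Then for each i ∈ {1,2,3,4}, the ideal of inertia forms satisfies T_𝔪(𝒟) = {p ∈ C : x_i^ν · p ∈ 𝒟 for some ν ∈ ℕ}; equivalently, T_𝔪(𝒟) is the kernel of the canonical map C → B_{x_i}. -/
set_option maxSynthPendingDepth 3

open MvPolynomial

/-- The maximal graded ideal `𝔪 = (x₁,x₂,x₃,x₄) ⊂ C`. -/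
noncomputable def mIdeal (k : Type*) [CommRing k] (d : Fin 2 → ℕ) : Ideal (Cring k d) :=
  Ideal.span (Set.range (X : Fin 4 → Cring k d))


/-- Evaluation of `C` at coefficients `u` and point `x`. -/
noncomputable def evC {k : Type*} [CommRing k] {d : Fin 2 → ℕ} {S : Type*} [CommRing S]
    (κ : k →+* S) (u : CoefIdx d → S) (x : Fin 4 → S) : Cring k d →+* S :=
  eval₂Hom (eval₂Hom κ u) x

/-- The exponent `(d-1)e_i + e_s`. -/
noncomputable def alp (d : Fin 2 → ℕ) (i : Fin 4) (a : Fin 2) (s : Fin 4) : Fin 4 →₀ ℕ :=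
  Finsupp.single i (d a - 1) + Finsupp.single s 1

lemma alp_inj (d : Fin 2 → ℕ) (i : Fin 4) (a : Fin 2) {s t : Fin 4}
    (h : alp d i a s = alp d i a t) : s = t := by
  have h2 := add_left_cancel h
  exact (Finsupp.single_left_inj one_ne_zero).mp h2

lemma alp_mem (d : Fin 2 → ℕ) (hd : ∀ i, 0 < d i) (i : Fin 4) (a : Fin 2) (s : Fin 4) :
    ((alp d i a s).sum fun _ e => e) = d a := by
  have := hd a
  rw [alp, Finsupp.sum_add_index' (by simp) (by simp)]
  rw [Finsupp.sum_single_index rfl, Finsupp.sum_single_index rfl]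
  omega

/-- Constructor for coefficient indices. -/
def mkI {d : Fin 2 → ℕ} (a : Fin 2) (α : Fin 4 →₀ ℕ) (h : (α.sum fun _ e => e) = d a) :
    CoefIdx d := ⟨a, ⟨α, h⟩⟩

/-- The index of `U_{a,(d-1)e_i+e_s}`. -/
noncomputable def idx (d : Fin 2 → ℕ) (hd : ∀ i, 0 < d i) (i : Fin 4) (a : Fin 2) (s : Fin 4) :
    CoefIdx d := ⟨a, ⟨alp d i a s, alp_mem d hd i a s⟩⟩

open Classical in
/-- A perturbation of the coefficients supported on the exponents `(d-1)e_i+e_s`. -/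
noncomputable def pert {d : Fin 2 → ℕ} {S : Type*} [CommRing S] (i : Fin 4)
    (v : Fin 2 → Fin 4 → S) (b : CoefIdx d) : S :=
  ∑ s, if b.2.1 = alp d i b.1 s then v b.1 s else 0

lemma pert_idx {d : Fin 2 → ℕ} (hd : ∀ i, 0 < d i) {S : Type*} [CommRing S] (i : Fin 4)
    (v : Fin 2 → Fin 4 → S) (a : Fin 2) (s : Fin 4) :
    pert i v (idx d hd i a s) = v a s := by
  classical
  unfold pert idx
  dsimp only
  rw [Finset.sum_eq_single s]
  · simp
  · intro t _ hts
    rw [if_neg]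
    intro h
    exact hts (alp_inj d i a h).symm
  · simp

section ev
variable {k : Type*} [CommRing k] {d : Fin 2 → ℕ} {S : Type*} [CommRing S]
    (κ : k →+* S) (u : CoefIdx d → S) (x : Fin 4 → S)

lemma evC_X (j : Fin 4) : evC κ u x (X j : Cring k d) = x j := by simp [evC]
lemma evC_CX (b : CoefIdx d) : evC κ u x (C (X b) : Cring k d) = u b := by simp [evC]

lemma evC_monomial (m : Fin 4 →₀ ℕ) (p : Aring k d) :
    evC κ u x (monomial m p) = eval₂Hom κ u p * ∏ j, x j ^ m j := by
  simp [evC, eval₂_monomial, Finsupp.prod_fintype]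

lemma evC_genF (a : Fin 2) :
    evC κ u x (genF k d a) = ∑ α ∈ (Finset.finsuppAntidiag (Finset.univ : Finset (Fin 4)) (d a)).attach,
      u (mkI a α.1 (Finset.mem_finsuppAntidiag'.mp α.2).1) * ∏ j, x j ^ α.1 j := by
  rw [genF, map_sum]
  refine Finset.sum_congr rfl fun α _ => ?_
  rw [evC_monomial]
  exact congrArg (· * _) (eval₂_X κ u (mkI a α.1 (Finset.mem_finsuppAntidiag'.mp α.2).1))

lemma evC_pderiv (a : Fin 2) (r : Fin 4) :
    evC κ u x (pderiv r (genF k d a)) =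
     ∑ α ∈ (Finset.finsuppAntidiag (Finset.univ : Finset (Fin 4)) (d a)).attach,
      u (mkI a α.1 (Finset.mem_finsuppAntidiag'.mp α.2).1) *
        ((α.1 r : S) * ∏ j, x j ^ (α.1 - Finsupp.single r 1 : Fin 4 →₀ ℕ) j) := by
  rw [genF, map_sum, map_sum]
  refine Finset.sum_congr rfl fun α _ => ?_
  rw [pderiv_monomial, evC_monomial, map_mul, map_natCast, mul_assoc]
  exact congrArg (· * _) (eval₂_X κ u (mkI a α.1 (Finset.mem_finsuppAntidiag'.mp α.2).1))

lemma sum_pert (hd : ∀ i, 0 < d i) (i : Fin 4) (v : Fin 2 → Fin 4 → S) (a : Fin 2)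
    (g : (Fin 4 →₀ ℕ) → S) :
    ∑ α ∈ (Finset.finsuppAntidiag (Finset.univ : Finset (Fin 4)) (d a)).attach,
      pert i v (mkI a α.1 (Finset.mem_finsuppAntidiag'.mp α.2).1 : CoefIdx d) * g α.1
      = ∑ s, v a s * g (alp d i a s) := by
  classical
  unfold pert mkI
  dsimp only
  rw [Finset.sum_attach (Finset.finsuppAntidiag (Finset.univ : Finset (Fin 4)) (d a))
    (fun α => (∑ s, if α = alp d i a s then v a s else 0) * g α)]
  simp_rw [Finset.sum_mul]
  rw [Finset.sum_comm]
  refine Finset.sum_congr rfl fun s _ => ?_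
  simp_rw [ite_mul, zero_mul]
  rw [Finset.sum_ite_eq' , if_pos]
  rw [Finset.mem_finsuppAntidiag']
  exact ⟨alp_mem d hd i a s, Finset.subset_univ _⟩

lemma evC_genF_pert (hd : ∀ i, 0 < d i) (i : Fin 4) (v : Fin 2 → Fin 4 → S) (a : Fin 2) :
    evC κ (u + pert i v) x (genF k d a) = evC κ u x (genF k d a) +
      x i ^ (d a - 1) * ∑ s, v a s * x s := by
  rw [evC_genF, evC_genF]
  simp_rw [Pi.add_apply, add_mul]
  rw [Finset.sum_add_distrib, sum_pert hd i v a (fun α => ∏ j, x j ^ α j), Finset.mul_sum]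
  congr 1
  refine Finset.sum_congr rfl fun s _ => ?_
  simp only [alp, Finsupp.add_apply, pow_add, Finset.prod_mul_distrib, Finsupp.single_apply,
    pow_ite, pow_zero, pow_one, Finset.prod_ite_eq, Finset.mem_univ, if_true]
  ring

lemma evC_pderiv_pert (hd : ∀ i, 0 < d i) (i : Fin 4) (v : Fin 2 → Fin 4 → S) (a : Fin 2)
    (r : Fin 4) (hr : r ≠ i) :
    evC κ (u + pert i v) x (pderiv r (genF k d a)) = evC κ u x (pderiv r (genF k d a)) +
      x i ^ (d a - 1) * v a r := by
  rw [evC_pderiv, evC_pderiv]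
  simp_rw [Pi.add_apply, add_mul]
  rw [Finset.sum_add_distrib, sum_pert hd i v a
    (fun α => (α r : S) * ∏ j, x j ^ (α - Finsupp.single r 1 : Fin 4 →₀ ℕ) j)]
  congr 1
  rw [Finset.sum_eq_single r]
  · have h : alp d i a r - Finsupp.single r 1 = Finsupp.single i (d a - 1) := by simp [alp]
    rw [h]
    simp only [alp, Finsupp.add_apply, Finsupp.single_apply,
      pow_ite, pow_zero, pow_one, Finset.prod_ite_eq, Finset.mem_univ, if_true, if_neg hr.symm]
    simp [mul_comm]
  · intro s _ hs
    simp [alp, Finsupp.single_apply, hr.symm, hs]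
  · simp

end ev

lemma genF_homog (k : Type*) [CommRing k] (d : Fin 2 → ℕ) (a : Fin 2) :
    (genF k d a).IsHomogeneous (d a) := by
  refine IsHomogeneous.sum _ _ _ fun α _ => ?_
  refine isHomogeneous_monomial _ ?_
  exact (Finset.mem_finsuppAntidiag'.mp α.2).1

lemma euler_J (k : Type*) [CommRing k] (d : Fin 2 → ℕ) (s : Fin 4) :
    ∑ r, X r * Jmin k d r s = (d 0 : Cring k d) * genF k d 0 * pderiv s (genF k d 1) -
      (d 1 : Cring k d) * genF k d 1 * pderiv s (genF k d 0) := by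
  have h0 := (genF_homog k d 0).sum_X_mul_pderiv
  have h1 := (genF_homog k d 1).sum_X_mul_pderiv
  rw [nsmul_eq_mul] at h0 h1
  rw [← h0, ← h1, Finset.sum_mul, Finset.sum_mul, ← Finset.sum_sub_distrib]
  refine Finset.sum_congr rfl fun r _ => ?_
  unfold Jmin; ring

lemma genF_mem (k : Type*) [CommRing k] (d : Fin 2 → ℕ) (a : Fin 2) :
    genF k d a ∈ Dideal k d := by
  apply Ideal.subset_span
  left
  fin_cases a <;> simp

lemma Jmin_self (k : Type*) [CommRing k] (d : Fin 2 → ℕ) (r : Fin 4) : Jmin k d r r = 0 := by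
  unfold Jmin; ring

lemma Jmin_swap (k : Type*) [CommRing k] (d : Fin 2 → ℕ) (r s : Fin 4) :
    Jmin k d r s = - Jmin k d s r := by
  unfold Jmin; ring

lemma Jmin_mem (k : Type*) [CommRing k] (d : Fin 2 → ℕ) (r s : Fin 4) :
    Jmin k d r s ∈ Dideal k d := by
  rcases lt_trichotomy r s with h | h | h
  · exact Ideal.subset_span (Or.inr ⟨r, s, h, rfl⟩)
  · subst h; rw [Jmin_self]; exact zero_mem _
  · rw [Jmin_swap]; exact neg_mem (Ideal.subset_span (Or.inr ⟨s, r, h, rfl⟩))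

/-- The ideal generated by two variables and the minors of a generic matrix. -/
noncomputable def I0 (k : Type*) [CommRing k] (d : Fin 2 → ℕ) (hd : ∀ i, 0 < d i) (i : Fin 4) :
    Ideal (Aring k d) :=
  Ideal.span ({p | ∃ a, p = X (idx d hd i a i)} ∪ {p | ∃ r s : Fin 4, r ≠ i ∧ s ≠ i ∧
    p = X (idx d hd i 0 r) * X (idx d hd i 1 s) - X (idx d hd i 0 s) * X (idx d hd i 1 r)})

lemma X_mul_mem_map_C {σ R : Type*} [CommRing R] (I : Ideal R) (j : σ) (p : MvPolynomial σ R)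
    (h : X j * p ∈ I.map (C : R →+* MvPolynomial σ R)) :
    p ∈ I.map (C : R →+* MvPolynomial σ R) := by
  rw [mem_map_C_iff] at h ⊢
  intro m
  have := h (Finsupp.single j 1 + m)
  rwa [coeff_X_mul] at this

lemma X_mul_mem_loc {σ R L : Type*} [CommRing R] [CommRing L] [Algebra (MvPolynomial σ R) L]
    (i j : σ) [IsLocalization.Away (X i : MvPolynomial σ R) L] (I : Ideal R) (z : L)
    (h : algebraMap (MvPolynomial σ R) L (X j) * z ∈
      (I.map (C : R →+* MvPolynomial σ R)).map (algebraMap (MvPolynomial σ R) L)) :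
    z ∈ (I.map (C : R →+* MvPolynomial σ R)).map (algebraMap (MvPolynomial σ R) L) := by
  obtain ⟨⟨p, m⟩, hz⟩ := IsLocalization.surj (Submonoid.powers (X i : MvPolynomial σ R)) z
  have hu : IsUnit (algebraMap (MvPolynomial σ R) L m) := IsLocalization.map_units L m
  dsimp only at hz
  have h2 : algebraMap (MvPolynomial σ R) L (X j * p) ∈
      (I.map (C : R →+* MvPolynomial σ R)).map (algebraMap (MvPolynomial σ R) L) := by
    rw [map_mul, ← hz, ← mul_assoc]
    exact Ideal.mul_mem_right _ _ h
  rw [IsLocalization.algebraMap_mem_map_algebraMap_iff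
    (Submonoid.powers (X i : MvPolynomial σ R))] at h2
  obtain ⟨m', hm', h3⟩ := h2
  have h4 : m' * p ∈ I.map (C : R →+* MvPolynomial σ R) := by
    apply X_mul_mem_map_C I j
    convert h3 using 1
    ring
  have h5 : algebraMap (MvPolynomial σ R) L p ∈
      (I.map (C : R →+* MvPolynomial σ R)).map (algebraMap (MvPolynomial σ R) L) := by
    rw [IsLocalization.algebraMap_mem_map_algebraMap_iff
      (Submonoid.powers (X i : MvPolynomial σ R))]
    exact ⟨m', hm', h4⟩
  rw [← hz] at h5
  exact (Ideal.mul_unit_mem_iff_mem _ hu).mp h5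

lemma key (k : Type*) [CommRing k] (d : Fin 2 → ℕ) (hd : ∀ i, 0 < d i) (i j : Fin 4)
    (p : Cring k d) (hp : X j * p ∈ Dideal k d) :
    ∃ N : ℕ, (X i : Cring k d) ^ N * p ∈ Dideal k d := by
  classical
  obtain ⟨L, _, _, _⟩ : ∃ (L : Type _) (_ : CommRing L) (_ : Algebra (Cring k d) L),
      IsLocalization.Away (X i : Cring k d) L :=
    ⟨Localization.Away (X i : Cring k d), inferInstance, inferInstance, inferInstance⟩
  set ι : Cring k d →+* L := algebraMap (Cring k d) L with hι
  let κ : k →+* L := ι.comp (C.comp C)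
  let x : Fin 4 → L := fun r => ι (X r)
  let U : CoefIdx d → L := fun b => ι (C (X b))
  have hιev : evC κ U x = ι := by
    apply MvPolynomial.ringHom_ext
    · intro q
      have : (evC κ U x).comp C = ι.comp (C : Aring k d →+* Cring k d) := by
        apply MvPolynomial.ringHom_ext
        · intro c; simp [evC, κ]
        · intro b; simp [evC, U]
      exact congrArg (fun f => f q) this
    · intro r; rw [evC_X]
  obtain ⟨y, hy⟩ : ∃ y, x i * y = 1 :=
    (IsLocalization.Away.algebraMap_isUnit (S := L) (X i : Cring k d)).exists_right_inv
  have hyp : ∀ n, x i ^ n * y ^ n = 1 := fun n => by rw [← mul_pow, hy, one_pow]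
  let F : Fin 2 → L := fun a => ι (genF k d a)
  let G : Fin 2 → Fin 4 → L := fun a r => ι (pderiv r (genF k d a))
  let u : Fin 2 → Fin 4 → L := fun a s => U (idx d hd i a s)
  let v0 : Fin 2 → Fin 4 → L := fun a r => u a r - y ^ (d a - 1) * G a r
  let v : Fin 2 → Fin 4 → L := fun a s => if s = i then
    u a i - y ^ (d a) * F a - y * ∑ r ∈ Finset.univ.erase i, v0 a r * x r else v0 a s
  let w : Fin 2 → Fin 4 → L := fun a s => if s = i then
    y ^ (d a) * F a - u a i else - v0 a s
  let φ : Cring k d →+* L := evC κ (U + pert i v) x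
  let ψ0 : Cring k d →+* L := evC κ (U + pert i w) x
  have hsplit : ∀ (f : Fin 4 → L), ∑ s, f s = f i + ∑ r ∈ Finset.univ.erase i, f r :=
    fun f => (Finset.add_sum_erase _ _ (Finset.mem_univ i)).symm
  have hvi : ∀ a, v a i = u a i - y ^ (d a) * F a - y * ∑ r ∈ Finset.univ.erase i, v0 a r * x r :=
    fun a => if_pos rfl
  have hvr : ∀ a r, r ≠ i → v a r = v0 a r := fun a r h => if_neg h
  have hwi : ∀ a, w a i = y ^ (d a) * F a - u a i := fun a => if_pos rfl
  have hwr : ∀ a r, r ≠ i → w a r = - v0 a r := fun a r h => if_neg h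
  have hdp : ∀ a, x i ^ (d a) = x i ^ (d a - 1) * x i := fun a => by
    rw [← pow_succ, Nat.sub_add_cancel (hd a)]
  have hdy : ∀ a, y ^ (d a) = y ^ (d a - 1) * y := fun a => by
    rw [← pow_succ, Nat.sub_add_cancel (hd a)]
  have hvs : ∀ a, ∑ r ∈ Finset.univ.erase i, v a r * x r =
      ∑ r ∈ Finset.univ.erase i, v0 a r * x r := fun a =>
    Finset.sum_congr rfl fun r hr => by rw [hvr a r (Finset.ne_of_mem_erase hr)]
  have hws : ∀ a, ∑ r ∈ Finset.univ.erase i, w a r * x r =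
      - ∑ r ∈ Finset.univ.erase i, v0 a r * x r := fun a => by
    rw [← Finset.sum_neg_distrib]
    exact Finset.sum_congr rfl fun r hr => by rw [hwr a r (Finset.ne_of_mem_erase hr)]; ring
  -- values of φ
  have hφF : ∀ a, φ (genF k d a) = x i ^ (d a) * u a i := by
    intro a
    have h1 := hyp (d a - 1)
    simp only [φ]
    rw [evC_genF_pert κ U x hd, hιev, hsplit, hvs, hvi, hdy, hdp]
    change F a + _ = _
    linear_combination (- F a * x i * y + x i ^ (d a -1) * x i * u a i * 0) * h1 - (F a + x i ^ (d a - 1) * ∑ r ∈ Finset.univ.erase i, v0 a r * x r) * hy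
  have hφG : ∀ a r, r ≠ i → φ (pderiv r (genF k d a)) = x i ^ (d a - 1) * u a r := by
    intro a r hr
    have h1 := hyp (d a - 1)
    simp only [φ]
    rw [evC_pderiv_pert κ U x hd i v a r hr, hιev, hvr a r hr]
    change G a r + _ = _
    simp only [v0]
    linear_combination (- G a r) * h1
  -- values of ψ
  have hψF : ∀ a, ψ0 (genF k d a) = F a + x i ^ (d a - 1) * (w a i * x i + - ∑ r ∈ Finset.univ.erase i, v0 a r * x r) := by
    intro a
    simp only [ψ0]
    rw [evC_genF_pert κ U x hd, hιev, hsplit, hws]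
  have hψG : ∀ a r, r ≠ i → ψ0 (pderiv r (genF k d a)) = G a r + x i ^ (d a - 1) * w a r := by
    intro a r hr
    simp only [ψ0]
    rw [evC_pderiv_pert κ U x hd i w a r hr, hιev]
  have hψu : ∀ a s, ψ0 (C (X (idx d hd i a s))) = u a s + w a s := by
    intro a s
    simp only [ψ0]
    rw [evC_CX, Pi.add_apply, pert_idx hd]
  have hψx : ∀ r, ψ0 (X r) = x r := fun r => evC_X _ _ _ _
  have hunit : IsUnit (ψ0 (X i)) := by
    rw [hψx]; exact IsUnit.of_mul_eq_one _ hy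
  let ψ : L →+* L := IsLocalization.Away.lift (X i : Cring k d) hunit
  have hψι : ∀ c, ψ (ι c) = ψ0 c := fun c => IsLocalization.Away.lift_eq _ hunit c
  have hψy : ψ y = y := by
    have h1 : ψ (x i) * ψ y = 1 := by rw [← map_mul, hy, map_one]
    have h2 : ψ (x i) = x i := by simp only [x]; rw [hψι, hψx]
    rw [h2] at h1
    linear_combination y * h1 - ψ y * hy
  have hψx' : ∀ r, ψ (x r) = x r := fun r => by simp only [x]; rw [hψι, hψx]
  have hψu' : ∀ a s, ψ (u a s) = u a s + w a s := fun a s => by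
    simp only [u, U]; rw [hψι, hψu]
  have hψF' : ∀ a, ψ (F a) = F a + x i ^ (d a - 1) * (w a i * x i + - ∑ r ∈ Finset.univ.erase i, v0 a r * x r) :=
    fun a => by simp only [F]; rw [hψι, hψF]
  have hψG' : ∀ a r, r ≠ i → ψ (G a r) = G a r + x i ^ (d a - 1) * w a r := fun a r hr => by
    simp only [G]; rw [hψι, hψG a r hr]
  have hψv0 : ∀ a r, r ≠ i → ψ (v0 a r) = v0 a r := by
    intro a r hr
    simp only [v0]
    rw [map_sub, map_mul, map_pow, hψy, hψG' a r hr, hψu']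
    linear_combination (- w a r) * hyp (d a - 1)
  have hψvs : ∀ a, ψ (∑ r ∈ Finset.univ.erase i, v0 a r * x r) =
      ∑ r ∈ Finset.univ.erase i, v0 a r * x r := fun a => by
    rw [map_sum]
    exact Finset.sum_congr rfl fun r hr => by
      rw [map_mul, hψx', hψv0 a r (Finset.ne_of_mem_erase hr)]
  have hψv : ∀ a s, ψ (v a s) = - w a s := by
    intro a s
    by_cases hs : s = i
    · subst hs
      rw [hvi, map_sub, map_sub, map_mul, map_mul, hψvs, map_pow, hψy, hψF', hψu', hdy]
      have h1 := hyp (d a - 1)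
      have h2 := hwi a
      rw [hdy] at h2
      linear_combination (-w a s * x s * y + y * ∑ r ∈ Finset.univ.erase s, v0 a r * x r) * h1 - w a s * hy + h2
    · rw [hvr a s hs, hwr a s hs, hψv0 a s hs, neg_neg]
  have hcomp : ψ.comp φ = ι := by
    rw [← hιev]
    apply MvPolynomial.ringHom_ext
    · intro q
      have : (ψ.comp φ).comp C = (evC κ U x).comp (C : Aring k d →+* Cring k d) := by
        apply MvPolynomial.ringHom_ext
        · intro c
          have h1 : φ (C (C c)) = ι (C (C c)) := by simp [φ, evC, κ]
          have h2 : ψ0 (C (C c)) = ι (C (C c)) := by simp [ψ0, evC, κ]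
          simp only [RingHom.comp_apply]
          rw [h1, hψι, h2, hιev]
        · intro b
          simp only [RingHom.comp_apply]
          have h1 : φ (C (X b)) = U b + pert i v b := by
            simp only [φ]; rw [evC_CX, Pi.add_apply]
          have h2 : ψ (U b) = U b + pert i w b := by
            simp only [U]; rw [hψι]; simp only [ψ0]; rw [evC_CX, Pi.add_apply]
          have h3 : ψ (pert i v b) = - pert i w b := by
            unfold pert
            rw [map_sum, ← Finset.sum_neg_distrib]
            refine Finset.sum_congr rfl fun s _ => ?_
            split_ifs
            · exact hψv _ _
            · simp
          rw [h1, map_add, h2, h3, evC_CX]; ring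
      exact congrArg (fun f => f q) this
    · intro r
      simp only [RingHom.comp_apply]
      have h1 : φ (X r) = x r := evC_X _ _ _ _
      rw [h1, hψx', evC_X]
  let K : Ideal L := ((I0 k d hd i).map (C : Aring k d →+* Cring k d)).map ι
  have hK : ∀ q ∈ I0 k d hd i, ι (C q) ∈ K := fun q hq =>
    Ideal.mem_map_of_mem _ (Ideal.mem_map_of_mem _ hq)
  have hKu : ∀ a, u a i ∈ K := fun a => hK _ (Ideal.subset_span (Or.inl ⟨a, rfl⟩))
  have hKm : ∀ r s, r ≠ i → s ≠ i → u 0 r * u 1 s - u 0 s * u 1 r ∈ K := fun r s hr hs => by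
    have := hK _ (Ideal.subset_span (Or.inr ⟨r, s, hr, hs, rfl⟩))
    simpa only [map_sub, map_mul] using this
  have hφFK : ∀ a, φ (genF k d a) ∈ K := fun a => by
    rw [hφF]; exact Ideal.mul_mem_left _ _ (hKu a)
  have hφJ : ∀ r s, r ≠ i → s ≠ i → φ (Jmin k d r s) ∈ K := by
    intro r s hr hs
    have : φ (Jmin k d r s) = (x i ^ (d 0 - 1) * x i ^ (d 1 - 1)) *
        (u 0 r * u 1 s - u 0 s * u 1 r) := by
      unfold Jmin
      rw [map_sub, map_mul, map_mul, hφG 0 r hr, hφG 1 s hs, hφG 0 s hs, hφG 1 r hr]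
      ring
    rw [this]; exact Ideal.mul_mem_left _ _ (hKm r s hr hs)
  have hφx : ∀ r, φ (X r) = x r := fun r => evC_X _ _ _ _
  have hφJi : ∀ s, s ≠ i → φ (Jmin k d i s) ∈ K := by
    intro s hs
    have h := congrArg φ (euler_J k d s)
    rw [map_sum, hsplit, map_mul, hφx, map_sub, map_mul, map_mul, map_mul, map_mul] at h
    have h2 : x i * φ (Jmin k d i s) ∈ K := by
      rw [eq_sub_of_add_eq h]
      refine sub_mem (sub_mem ?_ ?_) ?_
      · exact Ideal.mul_mem_right _ _ (Ideal.mul_mem_left _ _ (hφFK 0))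
      · exact Ideal.mul_mem_right _ _ (Ideal.mul_mem_left _ _ (hφFK 1))
      · refine sum_mem fun r hr => ?_
        rw [map_mul]
        exact Ideal.mul_mem_left _ _ (hφJ r s (Finset.ne_of_mem_erase hr) hs)
    have h3 := Ideal.mul_mem_left K y h2
    rwa [← mul_assoc, mul_comm y, hy, one_mul] at h3
  have hφD : ∀ q ∈ Dideal k d, φ q ∈ K := by
    intro q hq
    have : Dideal k d ≤ K.comap φ := by
      unfold Dideal
      rw [Ideal.span_le]
      rintro _ ((rfl | rfl) | ⟨r, s, hrs, rfl⟩)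
      · exact hφFK 0
      · exact hφFK 1
      · change φ _ ∈ K
        by_cases hr : r = i
        · subst hr; exact hφJi s hrs.ne'
        · by_cases hs : s = i
          · subst hs; rw [Jmin_swap, map_neg]; exact neg_mem (hφJi r hr)
          · exact hφJ r s hr hs
    exact this hq
  let M : Ideal L := (Dideal k d).map ι
  have hMF : ∀ a, F a ∈ M := fun a => Ideal.mem_map_of_mem _ (genF_mem k d a)
  have hMJ : ∀ r s, G 0 r * G 1 s - G 0 s * G 1 r ∈ M := fun r s => by
    have := Ideal.mem_map_of_mem ι (Jmin_mem k d r s)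
    unfold Jmin at this
    simpa only [map_sub, map_mul] using this
  have hψK : ∀ z ∈ K, ψ z ∈ M := by
    intro z hz
    have : K ≤ M.comap ψ := by
      simp only [K]
      rw [Ideal.map_le_iff_le_comap, Ideal.map_le_iff_le_comap]
      unfold I0
      rw [Ideal.span_le]
      rintro _ (⟨a, rfl⟩ | ⟨r, s, hr, hs, rfl⟩)
      · change ψ (u a i) ∈ M
        rw [hψu', hwi]
        have : u a i + (y ^ d a * F a - u a i) = y ^ d a * F a := by ring
        rw [this]
        exact Ideal.mul_mem_left _ _ (hMF a)
      · change ψ (ι (C _)) ∈ M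
        simp only [map_sub, map_mul]
        change ψ (u 0 r) * ψ (u 1 s) - ψ (u 0 s) * ψ (u 1 r) ∈ M
        rw [hψu', hψu', hψu', hψu', hwr _ r hr, hwr _ s hs, hwr _ r hr, hwr _ s hs]
        have : (u 0 r + -v0 0 r) * (u 1 s + -v0 1 s) - (u 0 s + -v0 0 s) * (u 1 r + -v0 1 r)
          = (y ^ (d 0 - 1) * y ^ (d 1 - 1)) * (G 0 r * G 1 s - G 0 s * G 1 r) := by
          simp only [v0]; ring
        rw [this]
        exact Ideal.mul_mem_left _ _ (hMJ r s)
    exact this hz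
  have h1 := hφD _ hp
  rw [map_mul, hφx] at h1
  have h2 : φ p ∈ K := X_mul_mem_loc i j (I0 k d hd i) (φ p) h1
  have h3 := hψK _ h2
  have h4 : ψ (φ p) = ι p := congrArg (fun f => f p) hcomp
  rw [h4] at h3
  have h5 := (IsLocalization.algebraMap_mem_map_algebraMap_iff
    (Submonoid.powers (X i : Cring k d)) L (Dideal k d) p).mp h3
  obtain ⟨m, ⟨N, rfl⟩, h6⟩ := h5
  exact ⟨N, h6⟩

lemma key_pow (k : Type*) [CommRing k] (d : Fin 2 → ℕ) (hd : ∀ i, 0 < d i) (i j : Fin 4)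
    (ν : ℕ) : ∀ p : Cring k d, X j ^ ν * p ∈ Dideal k d →
    ∃ N : ℕ, (X i : Cring k d) ^ N * p ∈ Dideal k d := by
  induction ν with
  | zero => intro p hp; exact ⟨0, by simpa using hp⟩
  | succ n ih =>
    intro p hp
    rw [pow_succ, mul_assoc] at hp
    obtain ⟨N, hN⟩ := ih _ hp
    obtain ⟨N', hN'⟩ := key k d hd i j (X i ^ N * p) (by convert hN using 1; ring)
    exact ⟨N' + N, by rw [pow_add, mul_assoc]; exact hN'⟩

lemma colon_of_pow (k : Type*) [CommRing k] (d : Fin 2 → ℕ) (p : Cring k d)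
    (h : ∀ j : Fin 4, ∃ N : ℕ, (X j : Cring k d) ^ N * p ∈ Dideal k d) :
    ∃ ν : ℕ, ∀ q ∈ (mIdeal k d) ^ ν, q * p ∈ Dideal k d := by
  have hle : mIdeal k d ≤ ((Dideal k d).colon {p}).radical := by
    unfold mIdeal
    rw [Ideal.span_le]
    rintro _ ⟨j, rfl⟩
    obtain ⟨N, hN⟩ := h j
    refine ⟨N, ?_⟩
    rw [Submodule.mem_colon_singleton]
    simpa using hN
  have hfg : (mIdeal k d).FG := 
    ⟨(Set.finite_range (X : Fin 4 → Cring k d)).toFinset, by simp [mIdeal]⟩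
  obtain ⟨n, hn⟩ := Ideal.exists_pow_le_of_le_radical_of_fg hle hfg
  refine ⟨n, fun q hq => ?_⟩
  have := hn hq
  rw [Submodule.mem_colon_singleton] at this
  simpa using this

/-- **Corollary.** If `k` is a domain, then for each `i` the ideal of inertia forms
`T_𝔪(𝒟) = {p : ∃ ν, 𝔪^ν·p ⊆ 𝒟}` equals `{p : ∃ ν, x_i^ν·p ∈ 𝒟}`, and also equals the
kernel of the canonical map `C → B_{x_i}`. -/
theorem inertiaForms_eq (k : Type*) [CommRing k] [IsDomain k] (d : Fin 2 → ℕ)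
    (hd : ∀ i, 0 < d i) (i : Fin 4) :
    {p : Cring k d | ∃ ν : ℕ, ∀ q ∈ (mIdeal k d) ^ ν, q * p ∈ Dideal k d}
      = {p : Cring k d | ∃ ν : ℕ, (X i : Cring k d) ^ ν * p ∈ Dideal k d} ∧
    {p : Cring k d | ∃ ν : ℕ, ∀ q ∈ (mIdeal k d) ^ ν, q * p ∈ Dideal k d}
      = {p : Cring k d |
          (algebraMap (Cring k d ⧸ Dideal k d)
              (Localization.Away (Ideal.Quotient.mk (Dideal k d) (X i : Cring k d))))
            (Ideal.Quotient.mk (Dideal k d) p) = 0} := by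
  have h1 : {p : Cring k d | ∃ ν : ℕ, ∀ q ∈ (mIdeal k d) ^ ν, q * p ∈ Dideal k d}
      = {p : Cring k d | ∃ ν : ℕ, (X i : Cring k d) ^ ν * p ∈ Dideal k d} := by
    ext p
    constructor
    · rintro ⟨ν, h⟩
      have hm : (X i : Cring k d) ∈ mIdeal k d := Ideal.subset_span (Set.mem_range_self i)
      exact ⟨ν, h _ (Ideal.pow_mem_pow hm ν)⟩
    · rintro ⟨ν, h⟩
      exact colon_of_pow k d p fun j => key_pow k d hd j i ν p h
  refine ⟨h1, ?_⟩
  rw [h1]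
  ext p
  simp only [Set.mem_ofPred_eq]
  rw [IsLocalization.map_eq_zero_iff
    (Submonoid.powers (Ideal.Quotient.mk (Dideal k d) (X i : Cring k d)))]
  constructor
  · rintro ⟨ν, h⟩
    refine ⟨⟨_, ν, rfl⟩, ?_⟩
    dsimp only
    rw [← map_pow, ← map_mul, Ideal.Quotient.eq_zero_iff_mem]
    exact h
  · rintro ⟨⟨_, ν, rfl⟩, h⟩
    dsimp only at h
    rw [← map_pow, ← map_mul, Ideal.Quotient.eq_zero_iff_mem] at h
    exact ⟨ν, h⟩
end

section
/- Let f₁, f₂ ∈ R[x₁,x₂,x₃,x₄] and let l = Σᵢ lᵢxᵢ, m = Σᵢ mᵢxᵢ, n = Σᵢ nᵢxᵢ be linear forms with coefficients in R. For any three row indices r₁ < r₂ < r₃ in {1,2,3,4}, let Δ ∈ R be the determinant of the 3×3 matrix whose rows are (l_{r_s}, m_{r_s}, n_{r_s}) for s = 1,2,3 (a 3-minor of the 4×3 coefficient matrix of l, m, n). Then both Δ·J(f₁,f₂,l,m) and Δ·J(f₁,f₂,l,n) belong to the ideal of R[x₁,x₂,x₃,x₄] generated by J(f₁,l,m,n)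 and J(f₂,l,m,n). -/
open MvPolynomial

/-- Determinant of the 4×4 Jacobian matrix `(∂ⱼpᵢ)` of four polynomials. -/
noncomputable def Jdet {R : Type*} [CommRing R]
    (p : Fin 4 → MvPolynomial (Fin 4) R) : MvPolynomial (Fin 4) R :=
  (Matrix.of fun i j => pderiv j (p i)).det

/-- The linear form `Σᵢ lᵢ xᵢ` with coefficients `l : Fin 4 → R`. -/
noncomputable def linForm {R : Type*} [CommRing R] (l : Fin 4 → R) :
    MvPolynomial (Fin 4) R :=
  ∑ i, C (l i) * X i

/-- Explicit 4×4 determinant by the Laplace expansion along the first two rows. -/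
def dd {S : Type*} [CommRing S] (a b c d : Fin 4 → S) : S :=
  (a 0 * b 1 - a 1 * b 0) * (c 2 * d 3 - c 3 * d 2)
  - (a 0 * b 2 - a 2 * b 0) * (c 1 * d 3 - c 3 * d 1)
  + (a 0 * b 3 - a 3 * b 0) * (c 1 * d 2 - c 2 * d 1)
  + (a 1 * b 2 - a 2 * b 1) * (c 0 * d 3 - c 3 * d 0)
  - (a 1 * b 3 - a 3 * b 1) * (c 0 * d 2 - c 2 * d 0)
  + (a 2 * b 3 - a 3 * b 2) * (c 0 * d 1 - c 1 * d 0)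

theorem dd_plucker {S : Type*} [CommRing S] (e a b l m n : Fin 4 → S) :
    dd e l m n * dd a b l m = - dd e a l m * dd b l m n + dd e b l m * dd a l m n := by
  unfold dd
  ring

theorem dd_plucker' {S : Type*} [CommRing S] (e a b l m n : Fin 4 → S) :
    dd e l m n * dd a b l n = - dd e a l n * dd b l m n + dd e b l n * dd a l m n := by
  unfold dd
  ring

theorem Jdet_eq_dd {R : Type*} [CommRing R] (p q s t : MvPolynomial (Fin 4) R) :
    Jdet ![p, q, s, t] = dd (fun j => pderiv j p) (fun j => pderiv j q)
      (fun j => pderiv j s) (fun j => pderiv j t) := by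
  unfold Jdet dd
  rw [Matrix.det_succ_row_zero]
  simp [Fin.sum_univ_succ, Matrix.det_fin_three, Fin.succAbove]
  ring

theorem pderiv_linForm {R : Type*} [CommRing R] (l : Fin 4 → R) (j : Fin 4) :
    pderiv j (linForm l) = C (l j) := by
  unfold linForm
  simp [Derivation.leibniz, pderiv_X, Pi.single_apply]

theorem minor_eq_dd {R : Type*} [CommRing R] (l m n : Fin 4 → R)
    (r : Fin 3 → Fin 4) (hr : StrictMono r) :
    ∃ e : Fin 4 → R, (Matrix.of fun s t => ![l, m, n] t (r s)).det = dd e l m n := by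
  have h01 : r 0 < r 1 := hr (by decide)
  have h12 : r 1 < r 2 := hr (by decide)
  rw [Matrix.det_fin_three]
  simp only [Matrix.of_apply, Matrix.cons_val_zero, Matrix.cons_val_one, Matrix.cons_val]
  generalize r 0 = x at *
  generalize r 1 = y at *
  generalize r 2 = z at *
  have key : (x = 0 ∧ y = 1 ∧ z = 2) ∨ (x = 0 ∧ y = 1 ∧ z = 3) ∨
      (x = 0 ∧ y = 2 ∧ z = 3) ∨ (x = 1 ∧ y = 2 ∧ z = 3) := by
    clear hr
    omega
  rcases key with ⟨rfl, rfl, rfl⟩ | ⟨rfl, rfl, rfl⟩ | ⟨rfl, rfl, rfl⟩ | ⟨rfl, rfl, rfl⟩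
  · refine ⟨![0, 0, 0, -1], ?_⟩
    simp [dd]
    ring
  · refine ⟨![0, 0, 1, 0], ?_⟩
    simp [dd]
    ring
  · refine ⟨![0, -1, 0, 0], ?_⟩
    simp [dd]
    ring
  · refine ⟨![1, 0, 0, 0], ?_⟩
    simp [dd]
    ring

/-- **Lemma.** Let `l, m, n` be linear forms, let `r : Fin 3 → Fin 4` be strictly monotone
(selecting three rows `r₁ < r₂ < r₃`), and let `Δ` be the corresponding 3-minor of the 4×3
coefficient matrix of `l, m, n` (rows `(l_{r_s}, m_{r_s}, n_{r_s})`). Then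
`Δ·J(f₁,f₂,l,m)` and `Δ·J(f₁,f₂,l,n)` belong to the ideal generated by
`J(f₁,l,m,n)` and `J(f₂,l,m,n)`. -/
theorem minor_mul_Jdet_mem_span {R : Type*} [CommRing R]
    (f₁ f₂ : MvPolynomial (Fin 4) R) (l m n : Fin 4 → R)
    (r : Fin 3 → Fin 4) (hr : StrictMono r)
    (Δ : R) (hΔ : Δ = (Matrix.of fun s t => ![l, m, n] t (r s)).det) :
    C Δ * Jdet ![f₁, f₂, linForm l, linForm m] ∈
      Ideal.span {Jdet ![f₁, linForm l, linForm m, linForm n],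
        Jdet ![f₂, linForm l, linForm m, linForm n]} ∧
    C Δ * Jdet ![f₁, f₂, linForm l, linForm n] ∈
      Ideal.span {Jdet ![f₁, linForm l, linForm m, linForm n],
        Jdet ![f₂, linForm l, linForm m, linForm n]} := by
  obtain ⟨e, he⟩ := minor_eq_dd l m n r hr
  have hC : C Δ = dd (fun j => (C (e j) : MvPolynomial (Fin 4) R)) (fun j => C (l j))
      (fun j => C (m j)) (fun j => C (n j)) := by
    rw [hΔ, he]
    simp [dd]
  simp only [Jdet_eq_dd, pderiv_linForm, hC]
  constructor
  · rw [dd_plucker, Ideal.mem_span_pair]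
    exact ⟨_, _, add_comm _ _⟩
  · rw [dd_plucker', Ideal.mem_span_pair]
    exact ⟨_, _, add_comm _ _⟩
end
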